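/- arXiv:2502.20666 — 12 statements merged into one kernel-verified Lean document; each statement's English description precedes it below -/
import Mathlib

section
/- Let X be a complex Banach space and L an invertible bounded linear operator on X. The following are equivalent: (1) L is expansive and has the shadowing property; (2) L is asymptotically expansive and has the shadowing property; (3) L is hyperbolic. -/
open Filter Topology

variable {X : Type*} [NormedAddCommGroup X] [NormedSpace ℂ X] [CompleteSpace X]

/-- `L` has the shadowing property. -/
def ShadowingProperty (L : X ≃L[ℂ] X) : Prop :=
  ∀ ε > (0 : ℝ), ∃ δ > (0 : ℝ), ∀ x : ℤ → X,
    (∀ n : ℤ, ‖L (x n) - x (n + 1)‖ ≤ δ) →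
    ∃ p : X, ∀ n : ℤ, ‖(L ^ n) p - x n‖ ≤ ε

/-- `L` is expansive. -/
def Expansive (L : X ≃L[ℂ] X) : Prop :=
  ∃ ε > (0 : ℝ), ∀ x : X, (∀ n : ℤ, ‖(L ^ n) x‖ ≤ ε) → x = 0

/-- `L` is asymptotically expansive. -/
def AsymptoticallyExpansive (L : X ≃L[ℂ] X) : Prop :=
  ∃ ε > (0 : ℝ), ∀ x : X, (∀ n : ℕ, ‖(L ^ n) x‖ ≤ ε) →
    Tendsto (fun n : ℕ => (L ^ n) x) atTop (𝓝 0)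

/-- `L` is hyperbolic: its spectrum misses the unit circle. -/
def Hyperbolic (L : X ≃L[ℂ] X) : Prop :=
  ∀ z ∈ spectrum ℂ (L : X →L[ℂ] X), ‖z‖ ≠ 1

theorem green_function {A : Type*} [NormedRing A] [NormedAlgebra ℂ A] [CompleteSpace A] (a : A)
    (h : ∀ z ∈ spectrum ℂ a, ‖z‖ ≠ 1) :
    ∃ (G : ℤ → A) (C t : ℝ), 0 ≤ C ∧ 0 < t ∧ t < 1 ∧
      (∀ k, a * G k = G (k + 1) - if k = -1 then 1 else 0) ∧
      (∀ k, a * G k = G k * a) ∧ ∀ k, ‖G k‖ ≤ C * t ^ k.natAbs := by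
  have hcl : IsClosed ((fun z : ℂ => ‖z‖) '' spectrum ℂ a) :=
    ((spectrum.isCompact a).image continuous_norm).isClosed
  have h1 : (1 : ℝ) ∈ ((fun z : ℂ => ‖z‖) '' spectrum ℂ a)ᶜ := by
    rintro ⟨z, hz, hz1⟩
    exact h z hz hz1
  obtain ⟨e, he, hball⟩ := Metric.isOpen_iff.1 hcl.isOpen_compl 1 h1
  obtain ⟨η, hη0, hη1, hηe⟩ : ∃ η : ℝ, 0 < η ∧ η < 1 ∧ η < e :=
    ⟨min (e / 2) (1 / 2), by positivity, by
      have := min_le_right (e / 2) (1 / 2); linarith, by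
      have := min_le_left (e / 2) (1 / 2); linarith⟩
  have hres : ∀ z : ℂ, 1 - η ≤ ‖z‖ → ‖z‖ ≤ 1 + η → z ∈ resolventSet ℂ a := by
    intro z hz1 hz2
    by_contra hz
    have : ‖z‖ ∈ ((fun z : ℂ => ‖z‖) '' spectrum ℂ a)ᶜ := by
      apply hball
      rw [Metric.mem_ball, Real.dist_eq, abs_lt]
      constructor <;> linarith
    exact this ⟨z, hz, rfl⟩
  have hd : ∀ z : ℂ, 1 - η ≤ ‖z‖ → ‖z‖ ≤ 1 + η → DifferentiableAt ℂ (resolvent a) z :=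
    fun z hz1 hz2 => (spectrum.hasDerivAt_resolvent_const_left (hres z hz1 hz2)).differentiableAt
  obtain ⟨K, hK⟩ : ∃ K, ∀ z ∈ {z : ℂ | 1 - η ≤ ‖z‖ ∧ ‖z‖ ≤ 1 + η}, ‖resolvent a z‖ ≤ K := by
    apply IsCompact.exists_bound_of_continuousOn
    · apply Metric.isCompact_of_isClosed_isBounded
      · exact (isClosed_le continuous_const continuous_norm).inter
          (isClosed_le continuous_norm continuous_const)
      · refine (Metric.isBounded_closedBall (x := (0 : ℂ)) (r := 1 + η)).subset ?_
        rintro z ⟨_, hz⟩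
        simpa using hz
    · intro z hz
      exact (hd z hz.1 hz.2).continuousAt.continuousWithinAt
  have hK0 : 0 ≤ K := (norm_nonneg _).trans (hK 1 ⟨by simp; linarith, by simp; linarith⟩)
  let I0 : ℤ → ℝ → A := fun n R => ∮ z in C(0, R), z ^ n • resolvent a z
  have hshift : ∀ n (r R : ℝ), 1 - η ≤ r → r ≤ R → R ≤ 1 + η → I0 n R = I0 n r := by
    intro n r R hr hrR hR
    have hr0 : 0 < r := by linarith
    have hR0 : 0 < R := by linarith
    have key := Complex.circleIntegral_sub_center_inv_smul_eq_of_differentiable_on_annulus_off_countable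
      (c := 0) hr0 hrR (f := fun z : ℂ => z ^ (n + 1) • resolvent a z) (s := ∅)
      Set.countable_empty (by
        intro z hz
        have hz1 : r ≤ ‖z‖ := by simpa using hz.2
        have hz2 : ‖z‖ ≤ R := by simpa using hz.1
        have hz0 : z ≠ 0 := norm_pos_iff.1 (by linarith)
        exact ((differentiableAt_zpow.2 (Or.inl hz0)).smul
          (hd z (by linarith) (by linarith))).continuousAt.continuousWithinAt) (by
        intro z hz
        have hz1 : r < ‖z‖ := by simpa using hz.1.2
        have hz2 : ‖z‖ < R := by simpa using hz.1.1
        have hz0 : z ≠ 0 := norm_pos_iff.1 (by linarith)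
        exact ((differentiableAt_zpow.2 (Or.inl hz0)).smul
          (hd z (by linarith) (by linarith))))
    have aux : ∀ ρ : ℝ, 0 < ρ → (∮ z in C(0, ρ), (z - 0)⁻¹ • (z ^ (n + 1) • resolvent a z))
        = I0 n ρ := by
      intro ρ hρ
      apply circleIntegral.integral_congr hρ.le
      intro z hz
      have hz' : ‖z‖ = ρ := by simpa using hz
      have hz0 : z ≠ 0 := norm_pos_iff.1 (by linarith)
      simp only [sub_zero, smul_smul]
      congr 1
      rw [zpow_add_one₀ hz0]
      field_simp
    rw [← aux r hr0, ← aux R hR0]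
    exact key
  have hbd : ∀ n (R : ℝ), 1 - η ≤ R → R ≤ 1 + η →
      ‖(2 * Real.pi * Complex.I : ℂ)⁻¹ • I0 n R‖ ≤ R * (R ^ n * K) := by
    intro n R h1 h2
    apply circleIntegral.norm_two_pi_i_inv_smul_integral_le_of_norm_le_const (by linarith)
    intro z hz
    have hz' : ‖z‖ = R := by simpa using hz
    rw [norm_smul, norm_zpow, hz']
    have : 0 < R := by linarith
    gcongr
    exact hK z ⟨by linarith, by linarith⟩
  have hcont : ∀ n : ℤ, ContinuousOn (fun z : ℂ => z ^ n • resolvent a z) (Metric.sphere 0 1) := by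
    intro n z hz
    have hz' : ‖z‖ = 1 := by simpa using hz
    have hz0 : z ≠ 0 := norm_pos_iff.1 (by linarith)
    exact ((differentiableAt_zpow.2 (Or.inl hz0)).smul
          (hd z (by linarith) (by linarith))).continuousAt.continuousWithinAt
  have hci : ∀ n : ℤ, CircleIntegrable (fun z : ℂ => z ^ n • resolvent a z) 0 1 :=
    fun n => (hcont n).circleIntegrable zero_le_one
  have hcomm : ∀ (T : A →L[ℂ] A) (n : ℤ),
      T (I0 n 1) = ∮ z in C(0, 1), T (z ^ n • resolvent a z) := by
    intro T n
    have := T.intervalIntegral_comp_comm (hci n).out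
    simp only [map_smul] at this
    simp only [I0, circleIntegral, map_smul]
    exact this.symm
  have hone : ∀ n : ℤ, (2 * Real.pi * Complex.I : ℂ)⁻¹ • (∮ z in C(0, 1), z ^ n • (1 : A))
      = if n = -1 then 1 else 0 := by
    intro n
    rw [circleIntegral.integral_smul_const]
    split_ifs with hn
    · subst hn
      have := circleIntegral.integral_sub_center_inv 0 (R := 1) one_ne_zero
      simp only [sub_zero] at this
      simp only [zpow_neg_one, this, smul_smul]
      rw [inv_mul_cancel₀ Complex.two_pi_I_ne_zero, one_smul]
    · have := circleIntegral.integral_sub_zpow_of_ne hn 0 0 1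
      simp only [sub_zero] at this
      simp [this]
  have hoi : ∀ n : ℤ, CircleIntegrable (fun z : ℂ => z ^ n • (1 : A)) 0 1 := by
    intro n
    apply ContinuousOn.circleIntegrable zero_le_one
    intro z hz
    have hz' : ‖z‖ = 1 := by simpa using hz
    have hz0 : z ≠ 0 := norm_pos_iff.1 (by linarith)
    exact ((differentiableAt_zpow.2 (Or.inl hz0)).smul
          (differentiableAt_const _)).continuousAt.continuousWithinAt
  have hmulL : ∀ z ∈ Metric.sphere (0 : ℂ) 1, a * resolvent a z = z • resolvent a z - 1 := by
    intro z hz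
    have hz' : ‖z‖ = 1 := by simpa using hz
    have hu : IsUnit (algebraMap ℂ A z - a) := hres z (by linarith) (by linarith)
    have := Ring.mul_inverse_cancel _ hu
    rw [sub_mul, ← Algebra.smul_def] at this
    rw [resolvent, ← this]; abel
  have hmulR : ∀ z ∈ Metric.sphere (0 : ℂ) 1, resolvent a z * a = z • resolvent a z - 1 := by
    intro z hz
    have hz' : ‖z‖ = 1 := by simpa using hz
    have hu : IsUnit (algebraMap ℂ A z - a) := hres z (by linarith) (by linarith)
    have := Ring.inverse_mul_cancel _ hu
    rw [mul_sub, ← Algebra.commutes, ← Algebra.smul_def] at this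
    rw [resolvent, ← this]; abel
  have hI : ∀ n : ℤ, (∮ z in C(0, 1), (z ^ n • (z • resolvent a z - 1)))
      = I0 (n + 1) 1 - ∮ z in C(0, 1), z ^ n • (1 : A) := by
    intro n
    rw [← circleIntegral.integral_sub (hci _) (hoi _)]
    apply circleIntegral.integral_congr zero_le_one
    intro z hz
    have hz' : ‖z‖ = 1 := by simpa using hz
    have hz0 : z ≠ 0 := norm_pos_iff.1 (by linarith)
    simp only [smul_sub, smul_smul, zpow_add_one₀ hz0]
  have hL : ∀ n : ℤ, a * I0 n 1 = I0 (n + 1) 1 - ∮ z in C(0, 1), z ^ n • (1 : A) := by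
    intro n
    have := hcomm (ContinuousLinearMap.mul ℂ A a) n
    simp only [ContinuousLinearMap.mul_apply', mul_smul_comm] at this
    rw [this, ← hI]
    apply circleIntegral.integral_congr zero_le_one
    intro z hz
    simp only [hmulL z hz]
  have hR : ∀ n : ℤ, I0 n 1 * a = I0 (n + 1) 1 - ∮ z in C(0, 1), z ^ n • (1 : A) := by
    intro n
    have := hcomm ((ContinuousLinearMap.mul ℂ A).flip a) n
    simp only [ContinuousLinearMap.flip_apply, ContinuousLinearMap.mul_apply', smul_mul_assoc] at this
    rw [this, ← hI]
    apply circleIntegral.integral_congr zero_le_one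
    intro z hz
    simp only [hmulR z hz]
  refine ⟨fun n => (2 * Real.pi * Complex.I : ℂ)⁻¹ • I0 n 1, (1 + η) * K,
    max (1 - η) (1 + η)⁻¹, by positivity, lt_max_of_lt_left (by linarith),
    max_lt (by linarith) (inv_lt_one_of_one_lt₀ (by linarith)), ?_, ?_, ?_⟩
  · intro k
    simp only [mul_smul_comm]
    rw [hL, smul_sub, hone]
  · intro k
    simp only [mul_smul_comm, smul_mul_assoc]
    rw [hL, hR]
  · intro k
    simp only
    obtain ⟨m, rfl | rfl⟩ := k.eq_nat_or_neg
    · rw [hshift m (1 - η) 1 le_rfl (by linarith) (by linarith)]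
      refine (hbd m (1 - η) le_rfl (by linarith)).trans ?_
      rw [Int.natAbs_natCast, zpow_natCast]
      have h3 : (1 - η) ^ m ≤ (max (1 - η) (1 + η)⁻¹) ^ m :=
        pow_le_pow_left₀ (by linarith) (le_max_left _ _) m
      have h4 : (0 : ℝ) ≤ (1 - η) ^ m := pow_nonneg (by linarith) m
      calc (1 - η) * ((1 - η) ^ m * K) ≤ (1 + η) * ((max (1 - η) (1 + η)⁻¹) ^ m * K) := by
            apply mul_le_mul (by linarith) (by gcongr) (by positivity) (by linarith)
        _ = _ := by ring
    · rw [← hshift (-m) 1 (1 + η) (by linarith) (by linarith) le_rfl]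
      refine (hbd (-m) (1 + η) (by linarith) le_rfl).trans ?_
      rw [Int.natAbs_neg, Int.natAbs_natCast, zpow_neg, zpow_natCast, ← inv_pow]
      have h3 : ((1 + η)⁻¹) ^ m ≤ (max (1 - η) (1 + η)⁻¹) ^ m :=
        pow_le_pow_left₀ (by positivity) (le_max_right _ _) m
      calc (1 + η) * (((1 + η)⁻¹) ^ m * K) ≤ (1 + η) * ((max (1 - η) (1 + η)⁻¹) ^ m * K) := by
            gcongr
        _ = _ := by ring

theorem zpow_succ_apply' (L : X ≃L[ℂ] X) (n : ℤ) (x : X) : (L ^ (n + 1)) x = L ((L ^ n) x) := by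
  rw [add_comm, zpow_add, zpow_one]; rfl

theorem zpow_add_apply' (L : X ≃L[ℂ] X) (m n : ℤ) (x : X) :
    (L ^ (m + n)) x = (L ^ m) ((L ^ n) x) := by
  rw [zpow_add]; rfl

theorem zpow_zero_apply' (L : X ≃L[ℂ] X) (x : X) : (L ^ (0 : ℤ)) x = x := by
  rw [zpow_zero]; rfl

theorem zpow_nat_apply' (L : X ≃L[ℂ] X) (n : ℕ) (x : X) : (L ^ (n : ℤ)) x = (L ^ n) x := by
  rw [zpow_natCast]

theorem orbit_eq (L : X ≃L[ℂ] X) (u : ℤ → X) (h : ∀ n, L (u n) = u (n + 1)) (n : ℤ) :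
    (L ^ n) (u 0) = u n := by
  induction n using Int.induction_on with
  | zero => exact zpow_zero_apply' L _
  | succ k ih => rw [zpow_succ_apply', ih, h]
  | pred k ih =>
    apply L.injective
    rw [← zpow_succ_apply', h, sub_add_cancel, ih]

theorem Expansive.eq_zero {L : X ≃L[ℂ] X} (h : Expansive L) {x : X} {B : ℝ}
    (hx : ∀ n : ℤ, ‖(L ^ n) x‖ ≤ B) : x = 0 := by
  obtain ⟨ε, hε, h⟩ := h
  have hB : 0 ≤ B := (norm_nonneg _).trans (hx 0)
  have hs : 0 < ε / (B + 1) := by positivity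
  have := h (((ε / (B + 1) : ℝ) : ℂ) • x) (fun n => by
    rw [map_smul, norm_smul, Complex.norm_real, Real.norm_of_nonneg hs.le, div_mul_eq_mul_div,
      div_le_iff₀ (by positivity)]
    have := hx n
    gcongr; linarith)
  exact (smul_eq_zero.1 this).resolve_left (by exact_mod_cast hs.ne')

theorem AsymptoticallyExpansive.tendsto {L : X ≃L[ℂ] X} (h : AsymptoticallyExpansive L) {x : X}
    {B : ℝ} (hx : ∀ n : ℕ, ‖(L ^ n) x‖ ≤ B) : Tendsto (fun n : ℕ => (L ^ n) x) atTop (𝓝 0) := by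
  obtain ⟨ε, hε, h⟩ := h
  have hB : 0 ≤ B := (norm_nonneg _).trans (hx 0)
  have hs : 0 < ε / (B + 1) := by positivity
  have := h (((ε / (B + 1) : ℝ) : ℂ) • x) (fun n => by
    rw [map_smul, norm_smul, Complex.norm_real, Real.norm_of_nonneg hs.le, div_mul_eq_mul_div,
      div_le_iff₀ (by positivity)]
    have := hx n
    gcongr; linarith)
  have h2 := this.const_smul (((ε / (B + 1) : ℝ) : ℂ)⁻¹)
  have h3 : ((ε / (B + 1) : ℝ) : ℂ) ≠ 0 := by exact_mod_cast hs.ne'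
  simpa only [map_smul, smul_smul, inv_mul_cancel₀ h3, one_smul, smul_zero] using h2

/-- Antidifference of a two-sided sequence. -/
def antidiff (d : ℤ → X) : ℤ → X
  | Int.ofNat n => ∑ i ∈ Finset.range n, d i
  | Int.negSucc n => -∑ i ∈ Finset.range (n + 1), d (Int.negSucc i)

theorem antidiff_succ (d : ℤ → X) (n : ℤ) : antidiff d (n + 1) = antidiff d n + d n := by
  rcases n with n | n
  · exact Finset.sum_range_succ (fun i : ℕ => d i) n
  · rcases n with _ | n
    · change antidiff d (Int.ofNat 0) = _
      simp [antidiff]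
    · change antidiff d (Int.negSucc n) = _
      simp only [antidiff]
      rw [Finset.sum_range_succ _ (n + 1)]
      abel

theorem exists_inhom (L : X ≃L[ℂ] X) (z : ℤ → X) : ∃ x : ℤ → X, ∀ n, L (x n) - x (n + 1) = z n := by
  refine ⟨fun n => (L ^ n) (antidiff (fun n => -(L ^ (-(n + 1))) (z n)) n), fun n => ?_⟩
  simp only
  rw [antidiff_succ, map_add, zpow_succ_apply', map_neg, ← zpow_add_apply',
    add_neg_cancel, zpow_zero_apply']
  abel

theorem bounded_solution {L : X ≃L[ℂ] X} (h : ShadowingProperty L) :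
    ∃ δ > (0 : ℝ), ∀ z : ℤ → X, (∀ n, ‖z n‖ ≤ δ) →
      ∃ y : ℤ → X, (∀ n, ‖y n‖ ≤ 1) ∧ ∀ n, L (y n) - y (n + 1) = z n := by
  obtain ⟨δ, hδ, h⟩ := h 1 one_pos
  refine ⟨δ, hδ, fun z hz => ?_⟩
  obtain ⟨x, hx⟩ := exists_inhom L z
  obtain ⟨p, hp⟩ := h x (fun n => by rw [hx]; exact hz n)
  refine ⟨fun n => x n - (L ^ n) p, fun n => by rw [norm_sub_rev]; exact hp n, fun n => ?_⟩
  simp only [map_sub, zpow_succ_apply', ← hx n]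
  abel

theorem hyperbolic_of_expansive {L : X ≃L[ℂ] X} (he : Expansive L) (hs : ShadowingProperty L) :
    Hyperbolic L := by
  intro l hl hl1
  have hl0 : l ≠ 0 := norm_pos_iff.1 (by linarith)
  refine hl ?_
  rw [resolventSet, Set.mem_setOf_eq] at *
  rw [ContinuousLinearMap.isUnit_iff_bijective]
  have happ : ∀ x, (algebraMap ℂ (X →L[ℂ] X) l - (L : X →L[ℂ] X)) x = l • x - L x := by
    intro x
    simp [Algebra.algebraMap_eq_smul_one]
  constructor
  · rw [injective_iff_map_eq_zero]
    intro p hp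
    rw [happ, sub_eq_zero] at hp
    have := orbit_eq L (fun n => l ^ n • p) (fun n => by
      simp only [map_smul, ← hp, smul_smul, zpow_add_one₀ hl0])
    simp only [zpow_zero, one_smul] at this
    refine he.eq_zero (B := ‖p‖) (fun n => ?_)
    rw [this, norm_smul, norm_zpow, hl1, one_zpow, one_mul]
  · intro z
    obtain ⟨δ, hδ, hsol⟩ := bounded_solution hs
    have hc : 0 < δ / (‖z‖ + 1) := by positivity
    set s : ℂ := ((δ / (‖z‖ + 1) : ℝ) : ℂ) with hsdef
    have hs0 : s ≠ 0 := by rw [hsdef]; exact_mod_cast hc.ne'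
    obtain ⟨y, hy1, hy⟩ := hsol (fun n => l ^ n • s • z) (fun n => by
      rw [norm_smul, norm_zpow, hl1, one_zpow, one_mul, norm_smul, hsdef, Complex.norm_real,
        Real.norm_of_nonneg hc.le, div_mul_eq_mul_div, div_le_iff₀ (by positivity)]
      gcongr; linarith)
    have horb := orbit_eq L (fun n => y (n + 1) - l • y n) (fun n => by
      have h1 := hy n
      have h2 := hy (n + 1)
      rw [zpow_add_one₀ hl0, mul_comm, mul_smul, ← h1, smul_sub] at h2
      rw [map_sub, map_smul, sub_eq_sub_iff_add_eq_add]
      rw [sub_eq_sub_iff_add_eq_add] at h2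
      rw [h2]; abel)
    have hz := he.eq_zero (B := 2) (fun n => by
      rw [horb n]
      refine (norm_sub_le _ _).trans ?_
      rw [norm_smul, hl1, one_mul]
      linarith [hy1 n, hy1 (n + 1)])
    rw [sub_eq_zero] at hz
    have h0 := hy 0
    rw [hz, zpow_zero, one_smul] at h0
    refine ⟨-(s⁻¹ • y 0), ?_⟩
    rw [happ, smul_neg, map_neg, map_smul, smul_comm, sub_neg_eq_add, neg_add_eq_sub, ← smul_sub,
      h0, smul_smul, inv_mul_cancel₀ hs0, one_smul]

theorem expansive_of_asymptotic {L : X ≃L[ℂ] X} (ha : AsymptoticallyExpansive L)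
    (hs : ShadowingProperty L) : Expansive L := by
  refine ⟨1, one_pos, fun p hB => ?_⟩
  by_contra hp
  have hp0 : 0 < ‖p‖ := norm_pos_iff.2 hp
  obtain ⟨δ, hδ, hsh⟩ := hs (‖p‖ / 2) (by positivity)
  obtain ⟨M, hM⟩ := exists_nat_gt (1 / δ)
  have hM0 : (0 : ℝ) < M := lt_trans (by positivity) hM
  have hM0' : (0 : ℤ) < M := by exact_mod_cast hM0
  have hMδ : 1 / (M : ℝ) ≤ δ := by
    rw [div_lt_iff₀ hδ] at hM
    rw [div_le_iff₀ hM0]; linarith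
  let a : ℤ → ℝ := fun m => 1 - |(m : ℝ) - M| / M
  have ha0 : a 0 = 0 := by simp [a, hM0.ne']
  have ha2 : a (2 * M) = 0 := by
    simp only [a]; push_cast
    rw [show (2 * (M : ℝ) - M) = M by ring, abs_of_pos hM0, div_self hM0.ne', sub_self]
  have haM : a M = 1 := by simp [a]
  have hab : ∀ m, |a m - a (m + 1)| ≤ 1 / M := by
    intro m
    simp only [a]
    rw [sub_sub_sub_cancel_left, ← sub_div, abs_div, abs_of_pos hM0]
    gcongr
    refine (abs_abs_sub_abs_le _ _).trans ?_
    push_cast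
    rw [show (m : ℝ) + 1 - M - (m - M) = 1 by ring, abs_one]
  let f : ℤ → X := fun m => (a m : ℂ) • (L ^ (m - M)) p
  have hf0 : f 0 = 0 := by simp [f, ha0]
  have hf2 : f (2 * M) = 0 := by simp [f, ha2]
  have hfM : f M = p := by simp only [f, haM, sub_self, zpow_zero_apply']; simp
  have hfstep : ∀ m, ‖L (f m) - f (m + 1)‖ ≤ δ := by
    intro m
    simp only [f]
    rw [map_smul, ← zpow_succ_apply', show m + 1 - (M : ℤ) = m - M + 1 by ring, ← sub_smul, norm_smul,
      ← Complex.ofReal_sub, Complex.norm_real, Real.norm_eq_abs]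
    calc _ ≤ (1 / M : ℝ) * 1 := by
          gcongr
          · exact hab m
          · exact hB _
      _ ≤ δ := by rw [mul_one]; exact hMδ
  have hfb : ∀ m : ℤ, 0 ≤ m → m < 2 * M → ‖f m‖ ≤ 1 := by
    intro m h0 h2
    simp only [f]
    rw [norm_smul, Complex.norm_real, Real.norm_eq_abs]
    have h0' : (0 : ℝ) ≤ m := by exact_mod_cast h0
    have h2' : (m : ℝ) < 2 * M := by exact_mod_cast h2
    have h3 : |(m : ℝ) - M| / M ≤ 1 := by
      rw [div_le_one hM0, abs_le]; constructor <;> linarith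
    have h4 : 0 ≤ |(m : ℝ) - M| / M := by positivity
    have : |a m| ≤ 1 := by
      simp only [a]
      rw [abs_le]; constructor <;> linarith
    calc _ ≤ (1 : ℝ) * 1 := by
          gcongr
          exact hB _
      _ = 1 := one_mul 1
  have hpos : (0 : ℤ) < 2 * M := by linarith
  obtain ⟨q, hq⟩ := hsh (fun n => f (n % (2 * M))) (fun n => by
    have h0 := Int.emod_nonneg n hpos.ne'
    have h1 := Int.emod_lt_of_pos n hpos
    have : f ((n + 1) % (2 * M)) = f (n % (2 * M) + 1) := by
      have hcase : (n + 1) % (2 * (M : ℤ)) = (n % (2 * M) + 1) % (2 * M) := by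
        rw [Int.emod_add_emod]
      rw [hcase]
      rcases (Int.add_one_le_iff.2 h1).lt_or_eq with hlt | heq
      · rw [Int.emod_eq_of_lt (by omega) hlt]
      · rw [heq, Int.emod_self, hf0, hf2]
    rw [this]
    exact hfstep _)
  have hlim := ha.tendsto (x := q) (B := ‖p‖ / 2 + 1) (fun n => by
    have h0 := Int.emod_nonneg (n : ℤ) hpos.ne'
    have h1 := Int.emod_lt_of_pos (n : ℤ) hpos
    have h2 := hq n
    have h3 := hfb _ h0 h1
    rw [zpow_nat_apply'] at h2
    have h4 := norm_sub_norm_le ((L ^ n) q) (f ((n : ℤ) % (2 * M)))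
    linarith)
  obtain ⟨n0, hn0⟩ := Metric.tendsto_atTop.1 hlim (‖p‖ / 2) (by positivity)
  have h1 := hn0 (M + 2 * M * n0) (by
    have : 0 < M := by exact_mod_cast hM0
    nlinarith)
  have h2 := hq ((M + 2 * M * n0 : ℕ) : ℤ)
  rw [zpow_nat_apply'] at h2
  have h3 : (((M + 2 * M * n0 : ℕ) : ℤ) % (2 * M)) = M := by
    push_cast
    rw [Int.add_mul_emod_self_left]
    exact Int.emod_eq_of_lt hM0'.le (by linarith)
  simp only [h3, hfM] at h2
  rw [dist_zero_right] at h1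
  have h4 := norm_sub_norm_le p ((L ^ (M + 2 * M * n0)) q)
  rw [norm_sub_rev] at h4
  linarith

theorem of_hyperbolic {L : X ≃L[ℂ] X} (h : Hyperbolic L) :
    Expansive L ∧ AsymptoticallyExpansive L ∧ ShadowingProperty L := by
  obtain ⟨G, C, t, hC, ht0, ht1, hrec, hcomm, hbd⟩ := green_function (L : X →L[ℂ] X) h
  have hrec' : ∀ k x, L (G k x) = G (k + 1) x - if k = -1 then x else 0 := by
    intro k x
    have := congrArg (fun T : X →L[ℂ] X => T x) (hrec k)
    simp only [ContinuousLinearMap.mul_apply, ContinuousLinearMap.sub_apply] at this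
    split_ifs at this ⊢ <;> simpa using this
  have hcomm' : ∀ k x, L (G k x) = G k (L x) := by
    intro k x
    exact congrArg (fun T : X →L[ℂ] X => T x) (hcomm k)
  have hGb : ∀ k x, ‖G k x‖ ≤ C * t ^ k.natAbs * ‖x‖ := fun k x =>
    (G k).le_of_opNorm_le (hbd k) x
  have hlimt : ∀ B : ℝ, Tendsto (fun n : ℕ => C * t ^ n * B) atTop (𝓝 0) := by
    intro B
    simpa using ((tendsto_pow_atTop_nhds_zero_of_lt_one ht0.le ht1).const_mul C).mul_const B
  have hlimt' : ∀ B : ℝ, Tendsto (fun n : ℕ => C * t ^ (n + 1) * B) atTop (𝓝 0) := fun B =>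
    (tendsto_add_atTop_iff_nat 1).2 (hlimt B)
  have hneg : ∀ (p : X) (B : ℝ), (∀ n : ℕ, ‖(L ^ n) p‖ ≤ B) → G 0 p = p := by
    intro p B hB
    have hconst : ∀ n : ℕ, G (-(n + 1 : ℕ)) ((L ^ (n + 1)) p) = G (-1) (L p) := by
      intro n
      induction n with
      | zero => simp
      | succ n ih =>
        rw [← ih, pow_succ' L (n + 1)]
        change G _ (L ((L ^ (n + 1)) p)) = _
        rw [← hcomm', hrec', if_neg (by push_cast; omega), sub_zero]
        congr 2
    have hz : G (-1) (L p) = 0 := by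
      refine norm_le_zero_iff.1 (ge_of_tendsto' (hlimt' B) (fun n => ?_))
      rw [← hconst n]
      refine (hGb _ _).trans ?_
      rw [Int.natAbs_neg, Int.natAbs_natCast]
      gcongr
      exact hB _
    rw [← hcomm', hrec', if_pos rfl, sub_eq_zero] at hz
    exact hz
  have hpow : ∀ (p : X) (n : ℕ), (L ^ n) (G 0 p) = G n p := by
    intro p n
    induction n with
    | zero => rfl
    | succ n ih =>
      rw [pow_succ']
      change L ((L ^ n) (G 0 p)) = _
      rw [ih, hrec', if_neg (by omega), sub_zero]; rfl
  have hpc : ∀ (p : X) (n : ℕ) (k : ℤ), (L ^ n) (G k p) = G k ((L ^ n) p) := by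
    intro p n k
    induction n with
    | zero => rfl
    | succ n ih =>
      rw [pow_succ']
      change L ((L ^ n) (G k p)) = G k (L ((L ^ n) p))
      rw [ih, hcomm']
  refine ⟨⟨1, one_pos, fun p hp => ?_⟩, ⟨1, one_pos, fun p hp => ?_⟩, ?_⟩
  · have h0 := hneg p 1 (fun n => by rw [← zpow_nat_apply']; exact hp n)
    refine norm_le_zero_iff.1 (ge_of_tendsto' (hlimt 1) (fun n => ?_))
    have h1 : p = G n ((L ^ (-(n : ℤ))) p) := by
      rw [← hpow, hpc, ← zpow_nat_apply', ← zpow_add_apply', add_neg_cancel, zpow_zero_apply', h0]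
    rw [h1]
    refine (hGb _ _).trans ?_
    rw [Int.natAbs_natCast]
    gcongr
    exact hp _
  · have h0 := hneg p 1 hp
    refine squeeze_zero_norm (fun n => ?_) (hlimt ‖p‖)
    conv_lhs => rw [← h0, hpow]
    simpa using hGb n p
  · have hsum : Summable (fun k : ℤ => C * t ^ k.natAbs) := by
      apply Summable.mul_left
      apply Summable.of_nat_of_neg <;>
        simpa using summable_geometric_of_lt_one ht0.le ht1
    set S := ∑' k : ℤ, C * t ^ k.natAbs with hS
    have hS0 : 0 ≤ S := tsum_nonneg (fun k => by positivity)
    intro ε hε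
    refine ⟨ε / (S + 1), by positivity, fun x hx => ?_⟩
    set δ := ε / (S + 1) with hδ
    have hδ0 : 0 < δ := by positivity
    let w : ℤ → X := fun n => x n - L (x (n - 1))
    have hw : ∀ n, ‖w n‖ ≤ δ := fun n => by
      have := hx (n - 1)
      rw [sub_add_cancel, norm_sub_rev] at this
      exact this
    have hterm : ∀ n k, ‖G k (w (n - k))‖ ≤ C * t ^ k.natAbs * δ := fun n k =>
      (hGb _ _).trans (by gcongr; exact hw _)
    have hsm : ∀ n, Summable (fun k => G k (w (n - k))) := fun n =>
      Summable.of_norm_bounded (hsum.mul_right δ) (hterm n)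
    let y : ℤ → X := fun n => ∑' k, G k (w (n - k))
    have hyb : ∀ n, ‖y n‖ ≤ ε := by
      intro n
      have h1 := tsum_of_norm_bounded (hsum.hasSum.mul_right δ) (hterm n)
      refine h1.trans ?_
      rw [← hS, hδ, mul_div_assoc', div_le_iff₀ (by positivity)]
      nlinarith
    have hyr : ∀ n, L (y n) = y (n + 1) - w (n + 1) := by
      intro n
      have h1 : L (y n) = ∑' k, L (G k (w (n - k))) := L.map_tsum
      have h2 : y (n + 1) = ∑' k : ℤ, G (k + 1) (w (n - k)) := by
        simp only [y]
        rw [← (Equiv.addRight (1 : ℤ)).tsum_eq]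
        simp only [Equiv.coe_addRight, add_sub_add_right_eq_sub]
      have h3 : Summable (fun k : ℤ => G (k + 1) (w (n - k))) := by
        have := (Equiv.addRight (1 : ℤ)).summable_iff.2 (hsm (n + 1))
        simpa only [Function.comp_def, Equiv.coe_addRight, add_sub_add_right_eq_sub] using this
      have h4 : HasSum (fun k : ℤ => if k = -1 then w (n - k) else 0) (w (n + 1)) := by
        have := hasSum_single (f := fun k : ℤ => if k = -1 then w (n - k) else 0) (-1)
          (fun k hk => if_neg hk)
        simpa using this
      rw [h1, h2, ← h4.tsum_eq, ← h3.tsum_sub h4.summable]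
      exact tsum_congr (fun k => hrec' k _)
    refine ⟨x 0 - y 0, fun n => ?_⟩
    have := orbit_eq L (fun n => x n - y n) (fun n => by
      rw [map_sub, hyr]
      simp only [w, add_sub_cancel_right]
      abel) n
    rw [this, sub_sub_cancel_left, norm_neg]
    exact hyb n

theorem expansive_shadowing_iff_hyperbolic (L : X ≃L[ℂ] X) :
    ((Expansive L ∧ ShadowingProperty L) ↔ Hyperbolic L) ∧
    ((AsymptoticallyExpansive L ∧ ShadowingProperty L) ↔ Hyperbolic L) := by
  refine ⟨⟨fun h => hyperbolic_of_expansive h.1 h.2, fun h => ?_⟩,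
    ⟨fun h => hyperbolic_of_expansive (expansive_of_asymptotic h.1 h.2) h.2, fun h => ?_⟩⟩
  · exact ⟨(of_hyperbolic h).1, (of_hyperbolic h).2.2⟩
  · exact (of_hyperbolic h).2
end

section
/- Let X be a complex Banach space and L an invertible bounded linear operator on X. If L is generalized hyperbolic with associated splitting X = S ⊕ U and projections P_S : X → S and P_U : X → U, then Shad(L) ≤ ‖P_S‖ · Σ_{k=0}^∞ ‖Lᵏ|_S‖ + ‖P_U‖ · Σ_{k=1}^∞ ‖L⁻ᵏ|_U‖ < ∞; in particular, L has the shadowing property. -/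
open Filter Topology

variable {X : Type*} [NormedAddCommGroup X] [NormedSpace ℂ X] [CompleteSpace X]

/-- `K` is a shadowableness constant of `L`. -/
def ShadowablenessConstant (L : X ≃L[ℂ] X) (K : ℝ) : Prop :=
  0 < K ∧ ∀ z : ℤ → X, (∃ M, ∀ n : ℤ, ‖z n‖ ≤ M) →
    ∃ y : ℤ → X, (∀ n : ℤ, ‖y n‖ ≤ K * ⨆ n : ℤ, ‖z n‖) ∧
      ∀ n : ℤ, y (n + 1) = L (y n) + z n

/-- `Shad L` is the infimum of the shadowableness constants of `L`
(`∞` if there are none). -/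
noncomputable def Shad (L : X ≃L[ℂ] X) : ENNReal :=
  ⨅ (K : ℝ) (_ : ShadowablenessConstant L K), ENNReal.ofReal K

theorem shadowing_of_const (L : X ≃L[ℂ] X) (K : ℝ) (hK : ShadowablenessConstant L K) :
    ShadowingProperty L := by
  obtain ⟨hK0, hK⟩ := hK
  intro ε hε
  refine ⟨ε / K, by positivity, fun x hx => ?_⟩
  obtain ⟨y, hy, hrec⟩ := hK (fun n => L (x n) - x (n + 1)) ⟨_, hx⟩
  have hw : ∀ n : ℤ, x (n + 1) + y (n + 1) = L (x n + y n) := by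
    intro n
    rw [hrec n, map_add]; abel
  have hpow : ∀ n : ℤ, (L ^ n) (x 0 + y 0) = x n + y n := by
    intro n
    induction n using Int.induction_on with
    | zero => rw [zpow_zero]; rfl
    | succ k ih =>
      rw [hw, ← ih, add_comm (k : ℤ) 1, zpow_add, zpow_one]; rfl
    | pred k ih =>
      apply L.injective
      rw [← hw, sub_add_cancel, ← ih]
      have : L ^ (-(k : ℤ)) = L * L ^ (-(k : ℤ) - 1) := by
        rw [← zpow_one_add]; congr 1; ring
      rw [this]; rfl
  refine ⟨x 0 + y 0, fun n => ?_⟩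
  rw [hpow n, add_sub_cancel_left]
  refine (hy n).trans ?_
  have : (⨆ n : ℤ, ‖L (x n) - x (n + 1)‖) ≤ ε / K := ciSup_le hx
  calc _ ≤ K * (ε / K) := by gcongr
    _ = ε := by field_simp

theorem shad_le_of_generalizedHyperbolic (L : X ≃L[ℂ] X) (S U : Submodule ℂ X)
    (hScl : IsClosed (S : Set X)) (hUcl : IsClosed (U : Set X)) (hcompl : IsCompl S U)
    (hLS : ∀ x ∈ S, L x ∈ S) (hLU : ∀ x ∈ U, L.symm x ∈ U)
    (c t : ℝ) (hc : 0 < c) (ht0 : 0 < t) (ht1 : t < 1)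
    (hSest : ∀ x ∈ S, ∀ n : ℕ, ‖(L ^ n) x‖ ≤ c * t ^ n * ‖x‖)
    (hUest : ∀ x ∈ U, ∀ n : ℕ, ‖(L.symm ^ n) x‖ ≤ c * t ^ n * ‖x‖)
    (PS PU : X →L[ℂ] X)
    (hPS : ∀ x, PS x ∈ S) (hPU : ∀ x, PU x ∈ U)
    (hPSU : ∀ x, PS x + PU x = x)
    (hPSid : ∀ x ∈ S, PS x = x) (hPUid : ∀ x ∈ U, PU x = x) :
    Summable (fun k : ℕ => ‖((L ^ k : X ≃L[ℂ] X) : X →L[ℂ] X).comp S.subtypeL‖) ∧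
    Summable (fun k : ℕ => ‖((L.symm ^ (k + 1) : X ≃L[ℂ] X) : X →L[ℂ] X).comp U.subtypeL‖) ∧
    Shad L ≤ ENNReal.ofReal
      (‖PS‖ * (∑' k : ℕ, ‖((L ^ k : X ≃L[ℂ] X) : X →L[ℂ] X).comp S.subtypeL‖) +
       ‖PU‖ * (∑' k : ℕ, ‖((L.symm ^ (k + 1) : X ≃L[ℂ] X) : X →L[ℂ] X).comp U.subtypeL‖)) ∧
    ShadowingProperty L := by
  have hA0 : ∀ k : ℕ, ‖((L ^ k : X ≃L[ℂ] X) : X →L[ℂ] X).comp S.subtypeL‖ ≤ c * t ^ k := by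
    intro k
    refine ContinuousLinearMap.opNorm_le_bound _ (by positivity) fun x => ?_
    exact hSest x x.2 k
  have hB0 : ∀ k : ℕ,
      ‖((L.symm ^ (k + 1) : X ≃L[ℂ] X) : X →L[ℂ] X).comp U.subtypeL‖ ≤ c * t ^ (k + 1) := by
    intro k
    refine ContinuousLinearMap.opNorm_le_bound _ (by positivity) fun x => ?_
    exact hUest x x.2 (k + 1)
  have hgeo : Summable fun k : ℕ => c * t ^ k :=
    (summable_geometric_of_lt_one ht0.le ht1).mul_left c
  have hA : Summable (fun k : ℕ => ‖((L ^ k : X ≃L[ℂ] X) : X →L[ℂ] X).comp S.subtypeL‖) :=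
    Summable.of_nonneg_of_le (fun _ => ContinuousLinearMap.opNorm_nonneg _) hA0 hgeo
  have hB : Summable (fun k : ℕ =>
      ‖((L.symm ^ (k + 1) : X ≃L[ℂ] X) : X →L[ℂ] X).comp U.subtypeL‖) :=
    Summable.of_nonneg_of_le (fun _ => ContinuousLinearMap.opNorm_nonneg _) hB0
      ((summable_nat_add_iff 1).2 hgeo)
  have hAb : ∀ (k : ℕ) (v : X), ‖(L ^ k) (PS v)‖ ≤
      ‖((L ^ k : X ≃L[ℂ] X) : X →L[ℂ] X).comp S.subtypeL‖ * (‖PS‖ * ‖v‖) := by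
    intro k v
    refine (ContinuousLinearMap.le_opNorm
      (((L ^ k : X ≃L[ℂ] X) : X →L[ℂ] X).comp S.subtypeL) ⟨PS v, hPS v⟩).trans ?_
    exact mul_le_mul_of_nonneg_left (PS.le_opNorm v) (ContinuousLinearMap.opNorm_nonneg _)
  have hBb : ∀ (k : ℕ) (v : X), ‖(L.symm ^ (k + 1)) (PU v)‖ ≤
      ‖((L.symm ^ (k + 1) : X ≃L[ℂ] X) : X →L[ℂ] X).comp U.subtypeL‖ * (‖PU‖ * ‖v‖) := by
    intro k v
    refine (ContinuousLinearMap.le_opNorm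
      (((L.symm ^ (k + 1) : X ≃L[ℂ] X) : X →L[ℂ] X).comp U.subtypeL) ⟨PU v, hPU v⟩).trans ?_
    exact mul_le_mul_of_nonneg_left (PU.le_opNorm v) (ContinuousLinearMap.opNorm_nonneg _)
  generalize hAdef : (fun k : ℕ => ‖((L ^ k : X ≃L[ℂ] X) : X →L[ℂ] X).comp S.subtypeL‖) = A at *
  generalize hBdef : (fun k : ℕ =>
      ‖((L.symm ^ (k + 1) : X ≃L[ℂ] X) : X →L[ℂ] X).comp U.subtypeL‖) = B at *
  have hAb' : ∀ (k : ℕ) (v : X), ‖(L ^ k) (PS v)‖ ≤ A k * (‖PS‖ * ‖v‖) := by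
    subst hAdef; exact hAb
  have hBb' : ∀ (k : ℕ) (v : X), ‖(L.symm ^ (k + 1)) (PU v)‖ ≤ B k * (‖PU‖ * ‖v‖) := by
    subst hBdef; exact hBb
  have hAn : ∀ k, 0 ≤ A k := by subst hAdef; exact fun k => ContinuousLinearMap.opNorm_nonneg _
  have hBn : ∀ k, 0 ≤ B k := by subst hBdef; exact fun k => ContinuousLinearMap.opNorm_nonneg _
  have hC0 : 0 ≤ ‖PS‖ * (∑' k, A k) + ‖PU‖ * (∑' k, B k) := by
    have : 0 ≤ ∑' k, A k := tsum_nonneg hAn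
    have : 0 ≤ ∑' k, B k := tsum_nonneg hBn
    positivity
  have key : ∀ K : ℝ, ‖PS‖ * (∑' k, A k) + ‖PU‖ * (∑' k, B k) < K →
      ShadowablenessConstant L K := by
    intro K hK
    refine ⟨hC0.trans_lt hK, fun z hz => ?_⟩
    obtain ⟨M₀, hM₀⟩ := hz
    have hbdd : BddAbove (Set.range fun n : ℤ => ‖z n‖) :=
      ⟨M₀, by rintro _ ⟨n, rfl⟩; exact hM₀ n⟩
    have hM : ∀ n, ‖z n‖ ≤ ⨆ n : ℤ, ‖z n‖ := fun n => le_ciSup hbdd n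
    generalize (⨆ n : ℤ, ‖z n‖) = M at hM
    have hM0 : 0 ≤ M := (norm_nonneg _).trans (hM 0)
    have ha : ∀ (k : ℕ) (n : ℤ), ‖(L ^ k) (PS (z n))‖ ≤ A k * (‖PS‖ * M) := fun k n =>
      (hAb' k (z n)).trans (mul_le_mul_of_nonneg_left
        (mul_le_mul_of_nonneg_left (hM n) (norm_nonneg _)) (hAn k))
    have hb : ∀ (k : ℕ) (n : ℤ), ‖(L.symm ^ (k + 1)) (PU (z n))‖ ≤ B k * (‖PU‖ * M) := fun k n =>
      (hBb' k (z n)).trans (mul_le_mul_of_nonneg_left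
        (mul_le_mul_of_nonneg_left (hM n) (norm_nonneg _)) (hBn k))
    have hsa : ∀ n : ℤ, Summable fun k : ℕ => (L ^ k) (PS (z (n - 1 - k))) := fun n =>
      Summable.of_norm_bounded (hA.mul_right _) fun k => ha k _
    have hsb : ∀ n : ℤ, Summable fun k : ℕ => (L.symm ^ (k + 1)) (PU (z (n + k))) := fun n =>
      Summable.of_norm_bounded (hB.mul_right _) fun k => hb k _
    refine ⟨fun n => (∑' k : ℕ, (L ^ k) (PS (z (n - 1 - k)))) -
      ∑' k : ℕ, (L.symm ^ (k + 1)) (PU (z (n + k))), fun n => ?_, fun n => ?_⟩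
    · have h1 := tsum_of_norm_bounded (hA.mul_right (‖PS‖ * M)).hasSum
        fun k : ℕ => ha k (n - 1 - k)
      have h2 := tsum_of_norm_bounded (hB.mul_right (‖PU‖ * M)).hasSum
        fun k : ℕ => hb k (n + k)
      rw [tsum_mul_right] at h1 h2
      refine (norm_sub_le _ _).trans ((add_le_add h1 h2).trans ?_)
      have := mul_le_mul_of_nonneg_right hK.le hM0
      linarith
    · have e1 : (∑' k : ℕ, (L ^ k) (PS (z (n + 1 - 1 - k)))) =
          PS (z n) + L (∑' k : ℕ, (L ^ k) (PS (z (n - 1 - k)))) := by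
        rw [(hsa (n + 1)).tsum_eq_zero_add, L.map_tsum]
        congr 1
        · simp; rfl
        · refine tsum_congr fun k => ?_
          have : (n + 1 - 1 - ((k + 1 : ℕ) : ℤ)) = n - 1 - k := by push_cast; ring
          rw [this, pow_succ']; rfl
      have e2 : L (∑' k : ℕ, (L.symm ^ (k + 1)) (PU (z (n + k)))) =
          PU (z n) + ∑' k : ℕ, (L.symm ^ (k + 1)) (PU (z (n + 1 + k))) := by
        have hc : ∀ (k : ℕ) (v : X), L ((L.symm ^ (k + 1)) v) = (L.symm ^ k) v := by
          intro k v
          rw [pow_succ']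
          exact L.apply_symm_apply _
        rw [(hsb n).tsum_eq_zero_add, map_add, L.map_tsum, hc]
        congr 1
        · simp; rfl
        · refine tsum_congr fun k => ?_
          have : (n + ((k + 1 : ℕ) : ℤ)) = n + 1 + k := by push_cast; ring
          rw [this, hc]
      dsimp only
      rw [map_sub, e1, e2]
      nth_rewrite 3 [← hPSU (z n)]
      abel
  refine ⟨hA, hB, ?_, shadowing_of_const L _ (key _ (lt_add_one _))⟩
  refine ENNReal.le_of_forall_pos_le_add fun ε hε _ => ?_
  have hk := key (‖PS‖ * (∑' k, A k) + ‖PU‖ * (∑' k, B k) + ε) (by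
    have : (0 : ℝ) < ε := hε
    linarith)
  refine (iInf₂_le _ hk).trans ?_
  rw [ENNReal.ofReal_add hC0 ε.coe_nonneg, ENNReal.ofReal_coe_nnreal]
end

section
/- Let X be a complex Banach space and L an invertible bounded linear operator on X. If L is generalized hyperbolic, then L is strongly structurally stable: for every ε > 0 there is δ > 0 such that for every Lipschitz and bounded map β : X → X with max{sup_{x∈X}‖β(x)‖, Lip(β)} < δ, there is a homeomorphism H : X → X such that sup_{x∈X}‖H(x) − x‖ ≤ ε and H ∘ L = (L + β) ∘ H. -/
open Filter Topology

variable {X : Type*} [NormedAddCommGroup X] [NormedSpace ℂ X] [CompleteSpace X]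

/-- `L` is generalized hyperbolic. -/
def GeneralizedHyperbolic (L : X ≃L[ℂ] X) : Prop :=
  ∃ S U : Submodule ℂ X,
    IsClosed (S : Set X) ∧ IsClosed (U : Set X) ∧ IsCompl S U ∧
    (∀ x ∈ S, L x ∈ S) ∧ (∀ x ∈ U, L.symm x ∈ U) ∧
    ∃ c > (0 : ℝ), ∃ t : ℝ, 0 < t ∧ t < 1 ∧
      (∀ x ∈ S, ∀ n : ℕ, ‖(L ^ n) x‖ ≤ c * t ^ n * ‖x‖) ∧
      (∀ x ∈ U, ∀ n : ℕ, ‖(L.symm ^ n) x‖ ≤ c * t ^ n * ‖x‖)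

theorem exists_green (L : X ≃L[ℂ] X) (hL : GeneralizedHyperbolic L) :
    ∃ Γ : ℤ → X →L[ℂ] X, Summable (fun k => ‖Γ k‖) ∧
      ∀ k x, Γ (k + 1) x = L (Γ k x) + if k = -1 then x else 0 := by
  obtain ⟨S, U, hS, hU, hc, -, -, c, hc0, t, ht0, ht1, h1, h2⟩ := hL
  have hT : S.IsTopCompl U := Submodule.IsCompl.isTopCompl_of_isClosed hc hS hU
  let P : X →L[ℂ] X := S.projectionL U hT
  let Q : X →L[ℂ] X := U.projectionL S hT.symm
  have hP : ∀ x, P x ∈ S := fun x => Submodule.projectionL_apply_mem hT x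
  have hQ : ∀ x, Q x ∈ U := fun x => Submodule.projectionL_apply_mem hT.symm x
  have hPQ : ∀ x, P x + Q x = x := fun x => Submodule.projectionL_add_projectionL_eq_self hT x
  let Γ : ℤ → X →L[ℂ] X := fun k => match k with
    | Int.ofNat n => ((L ^ n : X ≃L[ℂ] X) : X →L[ℂ] X).comp P
    | Int.negSucc n => -((L.symm ^ (n + 1) : X ≃L[ℂ] X) : X →L[ℂ] X).comp Q
  have hΓ1 : ∀ (n : ℕ) x, Γ (n : ℤ) x = (L ^ n) (P x) := fun n x => rfl
  have hΓ2 : ∀ (n : ℕ) x, Γ (Int.negSucc n) x = -(L.symm ^ (n + 1)) (Q x) := fun n x => rfl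
  have hg : Summable (fun n : ℕ => t ^ n) := summable_geometric_of_lt_one ht0.le ht1
  refine ⟨Γ, ?_, ?_⟩
  · apply Summable.of_nat_of_neg_add_one
    · refine Summable.of_nonneg_of_le (fun n => norm_nonneg _) (fun n => ?_)
        (hg.mul_left (c * ‖P‖))
      refine ContinuousLinearMap.opNorm_le_bound _ (by positivity) fun x => ?_
      rw [hΓ1]
      calc _ ≤ c * t ^ n * ‖P x‖ := h1 _ (hP x) n
        _ ≤ c * t ^ n * (‖P‖ * ‖x‖) := by gcongr; exact P.le_opNorm x
        _ = _ := by ring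
    · refine Summable.of_nonneg_of_le (fun n => norm_nonneg _) (fun n => ?_)
        (hg.mul_left (c * t * ‖Q‖))
      refine ContinuousLinearMap.opNorm_le_bound _ (by positivity) fun x => ?_
      rw [show (-((n : ℤ) + 1)) = Int.negSucc n from (Int.negSucc_eq n).symm, hΓ2, norm_neg]
      calc _ ≤ c * t ^ (n + 1) * ‖Q x‖ := h2 _ (hQ x) (n + 1)
        _ ≤ c * t ^ (n + 1) * (‖Q‖ * ‖x‖) := by gcongr; exact Q.le_opNorm x
        _ = _ := by ring
  · intro k x
    rcases k with n | n
    · have : (Int.ofNat n + 1) = ((n + 1 : ℕ) : ℤ) := by simp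
      rw [this, hΓ1, if_neg (by simp), add_zero]
      change _ = L (Γ (n : ℤ) x)
      rw [hΓ1, pow_succ']
      rfl
    · rcases n with _ | n
      · have e : Int.negSucc 0 + 1 = ((0 : ℕ) : ℤ) := rfl
        rw [e, hΓ1, hΓ2, if_pos (by rfl)]
        simp only [zero_add, pow_one, pow_zero, map_neg, ContinuousLinearEquiv.apply_symm_apply]
        change P x = _
        nth_rewrite 3 [← hPQ x]
        abel
      · have e : Int.negSucc (n + 1) + 1 = Int.negSucc n := rfl
        rw [e, hΓ2, hΓ2, if_neg (by omega), add_zero, pow_succ' _ (n + 1), map_neg]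
        change _ = -L (L.symm _)
        rw [ContinuousLinearEquiv.apply_symm_apply]
        rfl

theorem exists_solver (L : X ≃L[ℂ] X) (hL : GeneralizedHyperbolic L) :
    ∃ C > (0 : ℝ), ∃ T : (ℤ → X) → X,
      (∀ f D, (∀ n, ‖f n‖ ≤ D) → ‖T f‖ ≤ C * D) ∧
      (∀ f g D d, (∀ n, ‖f n‖ ≤ D) → (∀ n, ‖g n‖ ≤ D) → (∀ n, ‖f n - g n‖ ≤ d) →
        ‖T f - T g‖ ≤ C * d) ∧
      (∀ f D, (∀ n, ‖f n‖ ≤ D) → T (fun n => f (n + 1)) = L (T f) + f 0) ∧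
      (∀ (f : X → ℤ → X) D, (∀ n, Continuous fun x => f x n) → (∀ x n, ‖f x n‖ ≤ D) →
        Continuous fun x => T (f x)) := by
  obtain ⟨Γ, hs, hr⟩ := exists_green L hL
  have hb : ∀ (k : ℤ) (y : X) (D : ℝ), ‖y‖ ≤ D → ‖Γ k y‖ ≤ ‖Γ k‖ * D := fun k y D h =>
    (Γ k).le_opNorm_of_le h
  have hsum : ∀ (f : ℤ → X) D, (∀ n, ‖f n‖ ≤ D) → Summable fun k => Γ k (f (-k - 1)) :=
    fun f D h => Summable.of_norm_bounded (hs.mul_right D) fun k => hb k _ D (h _)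
  have hN : ∀ (f : ℤ → X) D, (∀ n, ‖f n‖ ≤ D) →
      ‖∑' k, Γ k (f (-k - 1))‖ ≤ (∑' k, ‖Γ k‖ + 1) * D := by
    intro f D h
    have hD : 0 ≤ D := (norm_nonneg _).trans (h 0)
    calc _ ≤ (∑' k, ‖Γ k‖) * D :=
          tsum_of_norm_bounded (hs.hasSum.mul_right D) fun k => hb k _ D (h _)
      _ ≤ _ := by gcongr; linarith
  refine ⟨∑' k, ‖Γ k‖ + 1, ?_, fun f => ∑' k, Γ k (f (-k - 1)), hN, ?_, ?_, ?_⟩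
  · have : 0 ≤ ∑' k, ‖Γ k‖ := tsum_nonneg fun k => norm_nonneg _
    linarith
  · intro f g D d hf hg hd
    have := hN (fun n => f n - g n) d hd
    simp only [map_sub] at this
    rwa [(hsum f D hf).tsum_sub (hsum g D hg)] at this
  · intro f D h
    dsimp only
    rw [← (Equiv.addRight (1 : ℤ)).tsum_eq]
    have e : ∀ k : ℤ, Γ ((Equiv.addRight (1 : ℤ)) k) (f (-((Equiv.addRight (1 : ℤ)) k) - 1 + 1))
        = L (Γ k (f (-k - 1))) + if k = -1 then f 0 else 0 := by
      intro k
      have e1 : -(k + 1) - 1 + 1 = -k - 1 := by ring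
      simp only [Equiv.coe_addRight, e1, hr]
      congr 1
      split_ifs with hk
      · subst hk; norm_num
      · rfl
    simp_rw [e]
    have s1 := hsum f D h
    rw [Summable.tsum_add, tsum_ite_eq, L.map_tsum]
    · exact (L.summable (f := fun k => Γ k (f (-k - 1)))).2 s1
    · exact (hasSum_ite_eq (-1 : ℤ) (f 0)).summable
  · intro f D hc h
    exact continuous_tsum (fun k => (Γ k).continuous.comp (hc _)) (hs.mul_right D)
      fun k x => hb k _ D (h x _)

theorem semiconj_zpow {Y : Type*} [TopologicalSpace Y] (A B : Y ≃ₜ Y) (φ : Y → Y)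
    (h : ∀ x, φ (A x) = B (φ x)) (n : ℤ) : ∀ x, φ ((A ^ n) x) = (B ^ n) (φ x) := by
  induction n with
  | zero => intro x; simp
  | succ n ih =>
    intro x
    rw [zpow_add_one, zpow_add_one, Homeomorph.mul_apply, ih, h, Homeomorph.mul_apply]
  | pred n ih =>
    intro x
    rw [zpow_sub_one, zpow_sub_one, Homeomorph.mul_apply, ih, Homeomorph.mul_apply]
    congr 1
    apply B.injective
    rw [← h]
    simp

/-- A generalized hyperbolic operator is strongly structurally stable. -/
theorem generalizedHyperbolic_strongly_structurally_stable (L : X ≃L[ℂ] X)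
    (hL : GeneralizedHyperbolic L) :
    ∀ ε > (0 : ℝ), ∃ δ > (0 : ℝ), ∀ β : X → X, ∀ K : NNReal,
      LipschitzWith K β → (K : ℝ) < δ → (∃ C, C < δ ∧ ∀ x, ‖β x‖ ≤ C) →
      ∃ H : X ≃ₜ X, (∀ x, ‖H x - x‖ ≤ ε) ∧ ∀ x, H (L x) = L (H x) + β (H x) := by
  intro ε hε
  obtain ⟨C, hC, T, hT1, hT2, hT3, hT4⟩ := exists_solver L hL
  set N : ℝ := ‖(L.symm : X →L[ℂ] X)‖ with hN
  have hN0 : 0 ≤ N := norm_nonneg _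
  refine ⟨min (ε / C) (min (1 / (2 * C)) (1 / (N + 1))), by positivity, ?_⟩
  rintro β K hβ hK ⟨D, hD, hβD⟩
  rw [lt_min_iff, lt_min_iff] at hK hD
  have hCD : C * D ≤ ε := by
    have := hD.1.le
    rwa [le_div_iff₀ hC, mul_comm] at this
  have hCK : C * K ≤ 1 / 2 := by
    have := hK.2.1.le
    rw [le_div_iff₀ (by positivity)] at this
    linarith
  have hlip : ∀ x y, ‖β x - β y‖ ≤ K * ‖x - y‖ := fun x y => by
    simpa [dist_eq_norm] using hβ.dist_le_mul x y
  -- the perturbed homeomorphism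
  have happ : ApproximatesLinearOn (fun x => L x + β x) (L : X →L[ℂ] X) Set.univ K := by
    intro x _ y _
    have e : L x + β x - (L y + β y) - (L : X →L[ℂ] X) (x - y) = β x - β y := by
      simp only [ContinuousLinearEquiv.coe_coe, map_sub]
      abel
    dsimp only
    rw [e]
    exact hlip x y
  obtain ⟨M, hM⟩ : ∃ M : X ≃ₜ X, ∀ x, M x = L x + β x := by
    refine ⟨happ.toHomeomorph _ ?_, fun x => rfl⟩
    rcases subsingleton_or_nontrivial X with h | h
    · exact Or.inl h
    · right
      have hpos : 0 < N := L.norm_symm_pos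
      rw [← NNReal.coe_lt_coe]
      push_cast
      calc (K : ℝ) < 1 / (N + 1) := hK.2.2
        _ ≤ 1 / N := by gcongr; linarith
        _ = N⁻¹ := one_div _
  let A : X ≃ₜ X := L.toHomeomorph
  have hA : ∀ x, A x = L x := fun x => rfl
  -- the fixed point
  let F : BoundedContinuousFunction X X → BoundedContinuousFunction X X := fun h =>
    BoundedContinuousFunction.ofNormedAddCommGroup
      (fun x => T (fun n => β ((A ^ n) x + h ((A ^ n) x))))
      (hT4 _ D (fun n => hβ.continuous.comp
        ((A ^ n).continuous.add (h.continuous.comp (A ^ n).continuous))) fun x n => hβD _)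
      (C * D) fun x => hT1 _ D fun n => hβD _
  have hFa : ∀ h x, F h x = T (fun n => β ((A ^ n) x + h ((A ^ n) x))) := fun h x => rfl
  have hF : ContractingWith (1 / 2) F := by
    refine ⟨by rw [← NNReal.coe_lt_coe]; push_cast; norm_num, LipschitzWith.of_dist_le_mul ?_⟩
    intro h g
    rw [BoundedContinuousFunction.dist_le (by positivity)]
    intro x
    rw [dist_eq_norm, hFa, hFa]
    calc _ ≤ C * (K * dist h g) := by
          refine hT2 _ _ D _ (fun n => hβD _) (fun n => hβD _) fun n => (hlip _ _).trans ?_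
          gcongr
          rw [add_sub_add_left_eq_sub, ← dist_eq_norm]
          exact BoundedContinuousFunction.dist_coe_le_dist _
      _ = (C * K) * dist h g := by ring
      _ ≤ _ := by push_cast; gcongr
  obtain ⟨h, hh⟩ : ∃ h, F h = h := ⟨_, hF.fixedPoint_isFixedPt⟩
  let H : X → X := fun x => x + h x
  have hhx : ∀ x, h x = T (fun n => β (H ((A ^ n) x))) := fun x => by
    conv_lhs => rw [← hh]
    rfl
  have hHc : Continuous H := continuous_id.add h.continuous
  have hHL : ∀ x, H (A x) = M (H x) := by
    intro x
    have e := hT3 (fun n => β (H ((A ^ n) x))) D fun n => hβD _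
    have e2 : h (A x) = L (h x) + β (H x) := by
      rw [hhx (A x), hhx x]
      simp only [zpow_add_one, Homeomorph.mul_apply, zpow_zero, Homeomorph.one_apply] at e
      exact e
    rw [hM]
    change A x + h (A x) = L (x + h x) + β (H x)
    rw [e2, hA, map_add, add_assoc]
  let k : X → X := fun x => T (fun n => β ((M ^ n) x))
  have hkc : Continuous k :=
    hT4 _ D (fun n => hβ.continuous.comp (M ^ n).continuous) fun x n => hβD _
  let G : X → X := fun x => x - k x
  have hGc : Continuous G := continuous_id.sub hkc
  have hGM : ∀ x, G (M x) = A (G x) := by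
    intro x
    have e := hT3 (fun n => β ((M ^ n) x)) D fun n => hβD _
    have e2 : k (M x) = L (k x) + β x := by
      simp only [zpow_add_one, Homeomorph.mul_apply, zpow_zero, Homeomorph.one_apply] at e
      exact e
    change M x - k (M x) = L (x - k x)
    rw [e2, hM, map_sub]
    abel
  have hHn := semiconj_zpow A M H hHL
  have hGn := semiconj_zpow M A G hGM
  have hGH : ∀ x, G (H x) = x := by
    intro x
    have : k (H x) = h x := by
      rw [hhx]
      simp only [hHn]
      rfl
    change x + h x - k (H x) = x
    rw [this, add_sub_cancel_right]
  have hE : ∀ x, H (G x) - x =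
      T (fun n => β (H (G ((M ^ n) x)))) - T (fun n => β ((M ^ n) x)) := by
    intro x
    have : h (G x) = T (fun n => β (H (G ((M ^ n) x)))) := by
      rw [hhx]
      simp only [hGn]
    rw [← this]
    change x - k x + h (G x) - x = h (G x) - k x
    abel
  have hstep : ∀ R, (∀ x, ‖H (G x) - x‖ ≤ R) → ∀ x, ‖H (G x) - x‖ ≤ R / 2 := by
    intro R hR x
    have hR0 : 0 ≤ R := (norm_nonneg _).trans (hR x)
    rw [hE]
    calc _ ≤ C * (K * R) := by
          refine hT2 _ _ D _ (fun n => hβD _) (fun n => hβD _) fun n => (hlip _ _).trans ?_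
          gcongr
          exact hR _
      _ = (C * K) * R := by ring
      _ ≤ 1 / 2 * R := by gcongr
      _ = R / 2 := by ring
  have hbase : ∀ x, ‖H (G x) - x‖ ≤ C * (2 * D) := by
    intro x
    rw [hE]
    refine hT2 _ _ D _ (fun n => hβD _) (fun n => hβD _) fun n => ?_
    calc _ ≤ _ := norm_sub_le _ _
      _ ≤ D + D := add_le_add (hβD _) (hβD _)
      _ = 2 * D := by ring
  have hiter : ∀ n : ℕ, ∀ x, ‖H (G x) - x‖ ≤ C * (2 * D) * (1 / 2) ^ n := by
    intro n
    induction n with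
    | zero => simpa using hbase
    | succ n ih =>
      intro x
      have := hstep _ ih x
      rw [pow_succ]
      linarith
  have hHG : ∀ x, H (G x) = x := by
    intro x
    have hlim : Tendsto (fun n : ℕ => C * (2 * D) * (1 / 2 : ℝ) ^ n) atTop (𝓝 0) := by
      simpa using (tendsto_pow_atTop_nhds_zero_of_lt_one (r := (1 / 2 : ℝ))
        (by norm_num) (by norm_num)).const_mul (C * (2 * D))
    have := ge_of_tendsto' hlim fun n => hiter n x
    exact sub_eq_zero.1 (norm_le_zero_iff.1 this)
  refine ⟨⟨⟨H, G, hGH, hHG⟩, hHc, hGc⟩, fun x => ?_, fun x => ?_⟩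
  · change ‖x + h x - x‖ ≤ ε
    rw [add_sub_cancel_left, hhx]
    exact (hT1 _ D fun n => hβD _).trans hCD
  · exact (hHL x).trans (hM _)
end

section
/- Let X be a complex Banach space and L an invertible bounded linear operator on X. If L is generalized hyperbolic and the central direction E^c = {x ∈ X : sup_{n∈ℤ}‖Lⁿ(x)‖ < ∞} is a closed subspace of X, then E^c = {0}; in particular, L is expansive. -/
open Filter Topology

variable {X : Type*} [NormedAddCommGroup X] [NormedSpace ℂ X] [CompleteSpace X]

/-- The central direction of `L`. -/
def CentralDirection (L : X ≃L[ℂ] X) : Set X :=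
  {x : X | ∃ M : ℝ, ∀ n : ℤ, ‖(L ^ n) x‖ ≤ M}

theorem gh_symm_eq {X : Type*} [NormedAddCommGroup X] [NormedSpace ℂ X] (L : X ≃L[ℂ] X) :
    L.symm = L⁻¹ := rfl

theorem gh_mul_apply {X : Type*} [NormedAddCommGroup X] [NormedSpace ℂ X] (A B : X ≃L[ℂ] X)
    (x : X) : (A * B) x = A (B x) := rfl

/-- On a closed central direction the powers of `L` are uniformly bounded. -/
theorem gh_uniform {X : Type*} [NormedAddCommGroup X] [NormedSpace ℂ X] [CompleteSpace X]
    (L : X ≃L[ℂ] X) (hcl : IsClosed (CentralDirection L)) :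
    ∃ C : ℝ, ∀ x ∈ CentralDirection L, ∀ n : ℤ, ‖(L ^ n) x‖ ≤ C * ‖x‖ := by
  let E : Submodule ℂ X :=
    { carrier := CentralDirection L
      add_mem' := by
        rintro a b ⟨M, hM⟩ ⟨N, hN⟩
        refine ⟨M + N, fun n => ?_⟩
        rw [map_add]
        exact (norm_add_le _ _).trans (add_le_add (hM n) (hN n))
      zero_mem' := ⟨0, fun n => by simp⟩
      smul_mem' := by
        rintro a x ⟨M, hM⟩
        refine ⟨‖a‖ * M, fun n => ?_⟩
        rw [map_smul, norm_smul]
        exact mul_le_mul_of_nonneg_left (hM n) (norm_nonneg _) }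
  have hE : IsClosed (E : Set X) := hcl
  haveI : CompleteSpace E := hE.completeSpace_coe
  obtain ⟨C, hC⟩ := banach_steinhaus
    (g := fun n : ℤ => ((L ^ n : X ≃L[ℂ] X) : X →L[ℂ] X).comp E.subtypeL)
    (fun x => by
      obtain ⟨M, hM⟩ := x.2
      exact ⟨M, fun n => hM n⟩)
  refine ⟨C, fun x hx n => ?_⟩
  have h := ((((L ^ n : X ≃L[ℂ] X) : X →L[ℂ] X).comp E.subtypeL).le_opNorm ⟨x, hx⟩)
  exact h.trans (mul_le_mul_of_nonneg_right (hC n) (norm_nonneg _))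

theorem gh_tendsto (c t a : ℝ) (h0 : 0 < t) (h1 : t < 1) :
    Tendsto (fun n : ℕ => c * t ^ n * a) atTop (𝓝 0) := by
  simpa using ((tendsto_pow_atTop_nhds_zero_of_lt_one h0.le h1).const_mul c).mul_const a

theorem gh_pow_mem {X : Type*} [NormedAddCommGroup X] [NormedSpace ℂ X] (A : X ≃L[ℂ] X)
    (V : Submodule ℂ X) (h : ∀ x ∈ V, A x ∈ V) (n : ℕ) : ∀ x ∈ V, (A ^ n) x ∈ V := by
  induction n with
  | zero => intro x hx; exact hx
  | succ k ih => intro x hx; rw [pow_succ, gh_mul_apply]; exact ih _ (h x hx)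

/-- If `A⁻¹` contracts the `A`-invariant subspace `V`, vectors of `V` with bounded forward
orbit vanish. -/
theorem gh_zero {X : Type*} [NormedAddCommGroup X] [NormedSpace ℂ X] (A : X ≃L[ℂ] X)
    (V : Submodule ℂ X) (h : ∀ x ∈ V, A x ∈ V) (c t : ℝ) (hc : 0 < c) (h0 : 0 < t) (h1 : t < 1)
    (hV : ∀ x ∈ V, ∀ n : ℕ, ‖(A⁻¹ ^ n) x‖ ≤ c * t ^ n * ‖x‖)
    (v : X) (hv : v ∈ V) (M : ℝ) (hM : ∀ n : ℕ, ‖(A ^ n) v‖ ≤ M) : v = 0 := by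
  have hb : ∀ n : ℕ, ‖v‖ ≤ c * t ^ n * M := fun n => by
    have h2 := hV _ (gh_pow_mem A V h n v hv) n
    have h3 : (A⁻¹ ^ n) ((A ^ n) v) = v := by
      rw [← gh_mul_apply, inv_pow, inv_mul_cancel]; rfl
    rw [h3] at h2
    exact h2.trans (mul_le_mul_of_nonneg_left (hM n) (by positivity))
  have := ge_of_tendsto' (gh_tendsto c t M h0 h1) hb
  exact norm_le_zero_iff.1 this

theorem centralDirection_eq_zero_of_generalizedHyperbolic (L : X ≃L[ℂ] X)
    (hL : GeneralizedHyperbolic L) (hcl : IsClosed (CentralDirection L)) :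
    CentralDirection L = {0} ∧ Expansive L := by
  obtain ⟨C, hC⟩ := gh_uniform L hcl
  obtain ⟨S, U, -, -, hSU, hLS, hLU, c, hc, t, h0, h1, hS, hU⟩ := hL
  rw [gh_symm_eq] at *
  have hle : ∀ n : ℕ, t ^ n ≤ 1 := fun n => pow_le_one₀ h0.le h1.le
  have hle2 : ∀ (n : ℕ) (a : X), c * t ^ n * ‖a‖ ≤ c * ‖a‖ := fun n a =>
    mul_le_mul_of_nonneg_right (mul_le_of_le_one_right hc.le (hle n)) (norm_nonneg _)
  have hLi : ∀ x, L (L⁻¹ x) = x := fun x => L.apply_symm_apply x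
  have hiL : ∀ x, L⁻¹ (L x) = x := fun x => L.symm_apply_apply x
  -- no nonzero homoclinic vectors
  have key : ∀ y ∈ S, L⁻¹ y ∈ U → y = 0 := by
    intro y hy hy'
    have hmem : y ∈ CentralDirection L := by
      refine ⟨c * ‖y‖ + c * ‖L⁻¹ y‖, fun n => ?_⟩
      have p1 : 0 ≤ c * ‖y‖ := by positivity
      have p2 : 0 ≤ c * ‖L⁻¹ y‖ := by positivity
      rcases n with n | n
      · have := (hS y hy n).trans (hle2 n y)
        simp only [Int.ofNat_eq_natCast, zpow_natCast]
        linarith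
      · have := (hU _ hy' n).trans (hle2 n _)
        rw [← gh_mul_apply, ← pow_succ, inv_pow] at this
        rw [zpow_negSucc]
        linarith
    have hb : ∀ n : ℕ, ‖y‖ ≤ |C| * (c * t ^ n * ‖y‖) := fun n => by
      have hm : (L ^ n) y ∈ CentralDirection L := by
        obtain ⟨M, hM⟩ := hmem
        refine ⟨M, fun m => ?_⟩
        have := hM (m + n)
        rwa [zpow_add, gh_mul_apply, zpow_natCast] at this
      have h2 := hC _ hm (-(n : ℤ))
      rw [← gh_mul_apply, zpow_neg, zpow_natCast, inv_mul_cancel] at h2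
      change ‖y‖ ≤ _ at h2
      calc ‖y‖ ≤ C * ‖(L ^ n) y‖ := h2
        _ ≤ |C| * ‖(L ^ n) y‖ := mul_le_mul_of_nonneg_right (le_abs_self C) (norm_nonneg _)
        _ ≤ _ := mul_le_mul_of_nonneg_left (hS y hy n) (abs_nonneg _)
    have ht := (gh_tendsto c t ‖y‖ h0 h1).const_mul |C|
    rw [mul_zero] at ht
    exact norm_le_zero_iff.1 (ge_of_tendsto' ht hb)
  have hdec : ∀ x : X, ∃ s ∈ S, ∃ u ∈ U, s + u = x := fun x =>
    Submodule.mem_sup.1 (hSU.sup_eq_top ▸ Submodule.mem_top)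
  have hLU' : ∀ x ∈ U, L x ∈ U := by
    intro x hx
    obtain ⟨s, hs, u, hu, hsu⟩ := hdec (L x)
    have hs0 : s = 0 := by
      apply key s hs
      have : s = L x - u := by rw [← hsu]; abel
      rw [this, map_sub, hiL]
      exact U.sub_mem hx (hLU u hu)
    rw [← hsu, hs0, zero_add]; exact hu
  have hLS' : ∀ x ∈ S, L⁻¹ x ∈ S := by
    intro x hx
    obtain ⟨s, hs, u, hu, hsu⟩ := hdec (L⁻¹ x)
    have hu0 : L u = 0 := by
      apply key
      · have : u = L⁻¹ x - s := by rw [← hsu]; abel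
        rw [this, map_sub, hLi]
        exact S.sub_mem hx (hLS s hs)
      · rw [hiL]; exact hu
    have hu1 : u = 0 := by rw [← hiL u, hu0, map_zero]
    rw [← hsu, hu1, add_zero]; exact hs
  have main : ∀ x ∈ CentralDirection L, x = 0 := by
    rintro x ⟨M, hM⟩
    obtain ⟨s, hs, u, hu, rfl⟩ := hdec x
    have hu0 : u = 0 := by
      refine gh_zero L U hLU' c t hc h0 h1 hU u hu (M + c * ‖s‖) fun n => ?_
      have e : (L ^ n) u = (L ^ n) (s + u) - (L ^ n) s := by rw [map_add]; abel
      have a1 := hM n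
      rw [zpow_natCast] at a1
      rw [e]
      exact (norm_sub_le _ _).trans (add_le_add a1 ((hS s hs n).trans (hle2 n s)))
    have hs0 : s = 0 := by
      refine gh_zero L⁻¹ S hLS' c t hc h0 h1 (by rw [inv_inv]; exact hS) s hs (M + c * ‖u‖)
        fun n => ?_
      have e : (L⁻¹ ^ n) s = (L⁻¹ ^ n) (s + u) - (L⁻¹ ^ n) u := by rw [map_add]; abel
      have a1 := hM (-(n : ℤ))
      rw [zpow_neg, zpow_natCast, ← inv_pow] at a1
      rw [e]
      exact (norm_sub_le _ _).trans (add_le_add a1 ((hU u hu n).trans (hle2 n u)))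
    rw [hu0, hs0, add_zero]
  refine ⟨?_, 1, one_pos, fun x hx => main x ⟨1, hx⟩⟩
  ext x
  constructor
  · exact fun hx => main x hx
  · rintro rfl
    exact ⟨0, fun n => by simp⟩
end

section
/- Let X be a complex Banach space and L an invertible bounded linear operator on X. If L has the shadowing property and the central direction E^c = {x ∈ X : sup_{n∈ℤ}‖Lⁿ(x)‖ < ∞} is a closed subspace of X, then E^c = {0}; in particular, L is expansive. -/
open Filter Topology

variable {X : Type*} [NormedAddCommGroup X] [NormedSpace ℂ X] [CompleteSpace X]

/-- The central direction as a submodule. -/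
def centralSubmodule (L : X ≃L[ℂ] X) : Submodule ℂ X where
  carrier := CentralDirection L
  zero_mem' := ⟨0, fun n => by simp⟩
  add_mem' := by
    rintro a b ⟨M, hM⟩ ⟨N, hN⟩
    refine ⟨M + N, fun n => ?_⟩
    rw [map_add]
    exact (norm_add_le _ _).trans (add_le_add (hM n) (hN n))
  smul_mem' := by
    rintro c a ⟨M, hM⟩
    refine ⟨‖c‖ * M, fun n => ?_⟩
    rw [map_smul, norm_smul]
    exact mul_le_mul_of_nonneg_left (hM n) (norm_nonneg c)

theorem central_uniform (L : X ≃L[ℂ] X) (hcl : IsClosed (CentralDirection L)) :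
    ∃ C : ℝ, ∀ x ∈ CentralDirection L, ∀ n : ℤ, ‖x‖ ≤ C * ‖(L ^ n) x‖ := by
  have hE : IsClosed (centralSubmodule L : Set X) := hcl
  have : CompleteSpace (centralSubmodule L) := hE.completeSpace_coe
  obtain ⟨C, hC⟩ := banach_steinhaus
    (g := fun n : ℤ => ((L ^ n : X ≃L[ℂ] X) : X →L[ℂ] X).comp (centralSubmodule L).subtypeL)
    (fun x => by
      obtain ⟨M, hM⟩ := x.2
      exact ⟨M, fun n => hM n⟩)
  refine ⟨C, fun x hx n => ?_⟩
  have hy : (L ^ n) x ∈ centralSubmodule L := by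
    obtain ⟨M, hM⟩ := hx
    refine ⟨M, fun k => ?_⟩
    rw [← zpow_add_apply']
    exact hM _
  have h1 := ContinuousLinearMap.le_of_opNorm_le _ (hC (-n)) ⟨_, hy⟩
  have h2 : (L ^ (-n)) ((L ^ n) x) = x := by
    rw [← zpow_add_apply', neg_add_cancel, zpow_zero]; rfl
  change ‖(L ^ (-n)) ((L ^ n) x)‖ ≤ C * ‖(L ^ n) x‖ at h1
  rwa [h2] at h1

theorem centralDirection_eq_zero_of_shadowing (L : X ≃L[ℂ] X)
    (hL : ShadowingProperty L) (hcl : IsClosed (CentralDirection L)) :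
    CentralDirection L = {0} ∧ Expansive L := by
  have key : ∀ x ∈ CentralDirection L, x = 0 := by
    intro x hx
    by_contra hx0
    have hxpos : 0 < ‖x‖ := norm_pos_iff.mpr hx0
    obtain ⟨C, hC⟩ := central_uniform L hcl
    obtain ⟨M, hM⟩ := hx
    have hMpos : 0 < M := hxpos.trans_le (by have h := hM 0; rw [zpow_zero] at h; exact h)
    obtain ⟨δ, hδ, hsh⟩ := hL 1 one_pos
    set η : ℝ := δ / M with hη
    have hηpos : 0 < η := div_pos hδ hMpos
    obtain ⟨N, hN⟩ := exists_nat_gt (2 * C / (η * ‖x‖))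
    rw [div_lt_iff₀ (mul_pos hηpos hxpos)] at hN
    let k : ℤ → ℤ := fun n => min (max n 0) N
    have hk1 : ∀ n, |k n - k (n + 1)| ≤ 1 := by
      intro n; simp only [k]; rw [abs_le]; omega
    have hk2 : ∀ n, |k n| ≤ N := by
      intro n; simp only [k]; rw [abs_le]; omega
    let c : ℤ → ℂ := fun n => (η : ℂ) * (k n : ℂ)
    have hc1 : ∀ n, ‖c n - c (n + 1)‖ ≤ η := by
      intro n
      have h : c n - c (n + 1) = (η : ℂ) * ((k n - k (n + 1) : ℤ) : ℂ) := by
        simp only [c]; push_cast; ring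
      have h' : (|((k n - k (n + 1) : ℤ) : ℝ)|) ≤ 1 := by exact_mod_cast hk1 n
      rw [h, norm_mul, Complex.norm_real, Complex.norm_intCast, Real.norm_of_nonneg hηpos.le]
      exact mul_le_of_le_one_right hηpos.le h'
    have hc2 : ∀ n, ‖c n‖ ≤ η * N := by
      intro n
      have h' : |((k n : ℤ) : ℝ)| ≤ N := by exact_mod_cast hk2 n
      simp only [c]
      rw [norm_mul, Complex.norm_real, Complex.norm_intCast, Real.norm_of_nonneg hηpos.le]
      exact mul_le_mul_of_nonneg_left h' hηpos.le
    obtain ⟨p, hp⟩ := hsh (fun n => c n • (L ^ n) x) (by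
      intro n
      have h : (L ^ (n + 1)) x = L ((L ^ n) x) := by
        rw [add_comm, zpow_add_apply', zpow_one]
      rw [map_smul, ← h, ← sub_smul, norm_smul]
      calc _ ≤ η * M := mul_le_mul (hc1 n) (hM _) (norm_nonneg _) hηpos.le
        _ = δ := div_mul_cancel₀ _ hMpos.ne')
    have hdiff : ∀ n m : ℤ, ‖(L ^ m) (p - c n • x)‖ ≤ 1 + η * N * M + η * N * M := by
      intro n m
      have hb : ∀ j : ℤ, ‖c j • (L ^ m) x‖ ≤ η * N * M := fun j => by
        rw [norm_smul]
        exact mul_le_mul (hc2 j) (hM m) (norm_nonneg _) (by positivity)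
      have e : (L ^ m) (p - c n • x) =
          ((L ^ m) p - c m • (L ^ m) x) + c m • (L ^ m) x - c n • (L ^ m) x := by
        rw [map_sub, map_smul]; abel
      rw [e]
      exact (norm_sub_le _ _).trans (add_le_add ((norm_add_le _ _).trans
        (add_le_add (hp m) (hb m))) (hb n))
    have hest : ∀ n, ‖p - c n • x‖ ≤ C * ‖(L ^ n) p - c n • (L ^ n) x‖ := by
      intro n
      have := hC _ ⟨_, hdiff n⟩ n
      rwa [map_sub, map_smul] at this
    have hC0 : 0 ≤ C := by
      have := hC x ⟨M, hM⟩ 0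
      simp only [zpow_zero] at this
      have h1 : ‖x‖ ≤ C * ‖x‖ := this
      nlinarith
    have hest' : ∀ n, ‖p - c n • x‖ ≤ C := fun n =>
      (hest n).trans (mul_le_of_le_one_right hC0 (hp n))
    have h0 := hest' 0
    have h1 := hest' N
    have hc0 : c 0 = 0 := by simp [c, k]
    have hcN : c N = (η : ℂ) * (N : ℂ) := by simp [c, k]
    rw [hc0, zero_smul, sub_zero] at h0
    have h2 : ‖c N • x‖ ≤ 2 * C := by
      have e : c N • x = p - (p - c N • x) := by abel
      rw [e]
      linarith [norm_sub_le p (p - c N • x)]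
    rw [hcN, norm_smul, norm_mul, Complex.norm_real, Complex.norm_natCast,
      Real.norm_of_nonneg hηpos.le] at h2
    nlinarith
  refine ⟨?_, 1, one_pos, fun x hx => key x ⟨1, hx⟩⟩
  ext x
  refine ⟨fun h => key x h, ?_⟩
  rintro rfl
  exact ⟨0, fun n => by simp⟩
end

section
/- Let X be a complex Banach space and L a generalized hyperbolic invertible bounded linear operator on X. Then L is hyperbolic if and only if H = {0}, where H = {x ∈ X : Lⁿ(x) → 0 as n → ±∞} is the set of homoclinic points of L. -/
open Filter Topology

variable {X : Type*} [NormedAddCommGroup X] [NormedSpace ℂ X] [CompleteSpace X]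

/-- The set of homoclinic points of `L`: points whose orbit tends to `0`
both forwards and backwards. -/
def Homoclinic (L : X ≃L[ℂ] X) : Set X :=
  {x : X | Tendsto (fun n : ℤ => (L ^ n) x) atTop (𝓝 0) ∧
    Tendsto (fun n : ℤ => (L ^ n) x) atBot (𝓝 0)}


theorem aux_coe_pow (L : X ≃L[ℂ] X) (n : ℕ) (x : X) :
    ((L : X →L[ℂ] X) ^ n) x = (L ^ n) x := by
  induction n generalizing x with
  | zero => rfl
  | succ n ih => rw [pow_succ, pow_succ]; exact ih (L x)

theorem aux_neumann (A : X →L[ℂ] X) (s : X) (C t : ℝ) (ht0 : 0 < t) (ht1 : t < 1)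
    (h : ∀ n : ℕ, ‖(A ^ n) s‖ ≤ C * t ^ n) : ∃ x, x - A x = s := by
  have hs : Summable (fun n : ℕ => (A ^ n) s) :=
    Summable.of_norm_bounded ((summable_geometric_of_lt_one ht0.le ht1).mul_left C) h
  refine ⟨∑' n : ℕ, (A ^ n) s, ?_⟩
  have h1 : A (∑' n : ℕ, (A ^ n) s) = ∑' n : ℕ, (A ^ (n + 1)) s := by
    rw [A.map_tsum hs]
    congr 1
    ext n
    rw [pow_succ']
    rfl
  rw [h1, hs.tsum_eq_zero_add]
  simp

theorem aux_core (L : X ≃L[ℂ] X) (s : X) (ρ C q : ℝ) (hρ : 0 < ρ) (hq0 : 0 < q) (hq1 : q < 1)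
    (hC : 0 ≤ C)
    (hsp : ∀ z ∈ spectrum ℂ (L : X →L[ℂ] X), ‖z‖ ≠ ρ)
    (hb : ∀ n : ℤ, ‖((ρ : ℂ) ^ (-n)) • (L ^ n) s‖ ≤ C * q ^ n.natAbs) : s = 0 := by
  have hρ' : (ρ : ℂ) ≠ 0 := by exact_mod_cast hρ.ne'
  set e : ℤ → X := fun n => ((ρ : ℂ) ^ (-n)) • (L ^ n) s with he
  have hsumq : Summable (fun j : ℤ => C * q ^ j.natAbs) := by
    apply Summable.mul_left
    apply Summable.of_nat_of_neg
    · simpa using summable_geometric_of_lt_one hq0.le hq1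
    · simpa using summable_geometric_of_lt_one hq0.le hq1
  have hbd : ∀ (N : ℕ), 1 ≤ N → ∀ j : ℤ, ‖e (j * N)‖ ≤ C * q ^ j.natAbs := by
    intro N hN j
    refine (hb _).trans ?_
    refine mul_le_mul_of_nonneg_left ?_ hC
    apply pow_le_pow_of_le_one hq0.le hq1.le
    rw [Int.natAbs_mul, Int.natAbs_natCast]
    exact Nat.le_mul_of_pos_right _ hN
  have hsum : ∀ (N : ℕ), 1 ≤ N → Summable (fun j : ℤ => e (j * N)) := fun N hN =>
    Summable.of_norm_bounded hsumq (hbd N hN)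
  have hstep : ∀ (N : ℕ) (j : ℤ), (L ^ N) (e (j * N)) = (ρ : ℂ) ^ N • e ((j + 1) * N) := by
    intro N j
    simp only [he]
    rw [map_smul, smul_smul]
    have h1 : (L ^ N) ((L ^ (j * N)) s) = (L ^ ((j + 1) * (N:ℤ))) s := by
      rw [add_mul, one_mul, add_comm, zpow_add, zpow_natCast]; rfl
    rw [h1]
    congr 1
    rw [← zpow_natCast, ← zpow_add₀ hρ']
    congr 1; ring
  have hzero : ∀ (N : ℕ), 1 ≤ N → ∑' j : ℤ, e (j * N) = 0 := by
    intro N hN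
    by_contra hy
    set y := ∑' j : ℤ, e (j * N) with hyd
    have hmap : ((L : X →L[ℂ] X) ^ N) y = (ρ : ℂ) ^ N • y := by
      rw [aux_coe_pow, hyd, ContinuousLinearEquiv.map_tsum]
      simp_rw [hstep]
      have := (Equiv.addRight (1:ℤ)).tsum_eq (fun j : ℤ => (ρ : ℂ) ^ N • e (j * N))
      simp only [Equiv.coe_addRight] at this
      rw [this, (hsum N hN).tsum_const_smul]
    have hmem : (ρ : ℂ) ^ N ∈ spectrum ℂ ((L : X →L[ℂ] X) ^ N) := by
      rw [spectrum.mem_iff]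
      intro hu
      have hinj := (ContinuousLinearMap.isUnit_iff_bijective.1 hu).1
      apply hy
      apply hinj
      rw [map_zero, ContinuousLinearMap.sub_apply, hmap]
      simp [Algebra.algebraMap_eq_smul_one]
    rw [spectrum.map_pow_of_pos _ (by omega)] at hmem
    obtain ⟨z, hz, hzN⟩ := hmem
    apply hsp z hz
    have := congrArg norm hzN
    simp only [norm_pow, Complex.norm_real, Real.norm_eq_abs, abs_of_pos hρ] at this
    exact (pow_left_inj₀ (norm_nonneg z) hρ.le (by omega)).1 this
  have hlim : Tendsto (fun N : ℕ => ∑' j : ℤ, e (j * N)) atTop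
      (𝓝 (∑' j : ℤ, if j = 0 then s else 0)) := by
    apply tendsto_tsum_of_dominated_convergence hsumq
    · intro j
      by_cases hj : j = 0
      · simp [hj, he]; rfl
      · simp only [hj, if_false]
        have : Tendsto (fun N : ℕ => C * q ^ N) atTop (𝓝 0) := by
          simpa using (tendsto_pow_atTop_nhds_zero_of_lt_one hq0.le hq1).const_mul C
        refine squeeze_zero_norm (fun N => ?_) this
        refine (hb _).trans ?_
        refine mul_le_mul_of_nonneg_left ?_ hC
        apply pow_le_pow_of_le_one hq0.le hq1.le
        rw [Int.natAbs_mul, Int.natAbs_natCast]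
        exact Nat.le_mul_of_pos_left _ (Int.natAbs_pos.2 hj)
    · filter_upwards [eventually_ge_atTop 1] with N hN j using hbd N hN j
  rw [tsum_ite_eq] at hlim
  have h0 : Tendsto (fun N : ℕ => ∑' j : ℤ, e (j * N)) atTop (𝓝 0) := by
    refine tendsto_const_nhds.congr' ?_
    filter_upwards [eventually_ge_atTop 1] with N hN using (hzero N hN).symm
  exact tendsto_nhds_unique hlim h0

theorem aux_symm_pow (L : X ≃L[ℂ] X) (n : ℕ) : L.symm ^ n = L ^ (-(n : ℤ)) := by
  rw [zpow_neg, zpow_natCast, ← inv_pow]; rfl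

theorem aux_bdd {f : ℕ → X} (h : Tendsto f atTop (𝓝 0)) : ∃ C, 0 ≤ C ∧ ∀ n, ‖f n‖ ≤ C := by
  obtain ⟨C, hC⟩ := h.norm.bddAbove_range
  exact ⟨C, (norm_nonneg _).trans (hC ⟨0, rfl⟩), fun n => hC ⟨n, rfl⟩⟩

theorem aux_decay {f : ℕ → X} {C t : ℝ} (ht0 : 0 < t) (ht1 : t < 1)
    (h : ∀ n, ‖f n‖ ≤ C * t ^ n) : Tendsto f atTop (𝓝 0) := by
  refine squeeze_zero_norm h ?_
  simpa using (tendsto_pow_atTop_nhds_zero_of_lt_one ht0.le ht1).const_mul C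

theorem aux_core_nat (L : X ≃L[ℂ] X) (s : X) (ρ C q : ℝ) (hρ : 0 < ρ) (hq0 : 0 < q) (hq1 : q < 1)
    (hC : 0 ≤ C)
    (hsp : ∀ z ∈ spectrum ℂ (L : X →L[ℂ] X), ‖z‖ ≠ ρ) (a b : ℝ) (ha : 0 ≤ a) (hb : 0 ≤ b)
    (haq : a ≤ q * ρ) (hbq : b * ρ ≤ q)
    (h1 : ∀ n : ℕ, ‖(L ^ n) s‖ ≤ C * a ^ n)
    (h2 : ∀ n : ℕ, ‖(L.symm ^ n) s‖ ≤ C * b ^ n) : s = 0 := by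
  refine aux_core L s ρ C q hρ hq0 hq1 hC hsp ?_
  intro n
  obtain ⟨m, rfl | rfl⟩ := n.eq_nat_or_neg
  · rw [norm_smul, norm_zpow, Complex.norm_real, Real.norm_eq_abs, abs_of_pos hρ, zpow_neg,
      zpow_natCast, zpow_natCast, Int.natAbs_natCast, inv_mul_le_iff₀ (by positivity)]
    calc _ ≤ _ := h1 m
      _ ≤ C * (q * ρ) ^ m := by gcongr
      _ = _ := by rw [mul_pow]; ring
  · rw [norm_smul, norm_zpow, Complex.norm_real, Real.norm_eq_abs, abs_of_pos hρ, neg_neg,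
      zpow_natCast, ← aux_symm_pow, Int.natAbs_neg, Int.natAbs_natCast]
    calc _ ≤ ρ ^ m * (C * b ^ m) := by gcongr; exact h2 m
      _ = C * (b * ρ) ^ m := by rw [mul_pow]; ring
      _ ≤ _ := by gcongr

theorem aux_hom_iff (L : X ≃L[ℂ] X) (x : X) : x ∈ Homoclinic L ↔
    Tendsto (fun n : ℕ => (L ^ n) x) atTop (𝓝 0) ∧
    Tendsto (fun n : ℕ => (L.symm ^ n) x) atTop (𝓝 0) := by
  unfold Homoclinic
  simp only [Set.mem_setOf_eq]
  apply and_congr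
  · rw [← Nat.map_cast_int_atTop, tendsto_map'_iff]
    simp [Function.comp_def]
  · rw [← Filter.map_neg_atTop, ← Nat.map_cast_int_atTop, tendsto_map'_iff, tendsto_map'_iff]
    simp only [Function.comp_def, aux_symm_pow]

theorem aux_comm (L : X ≃L[ℂ] X) (n : ℕ) (x : X) : (L ^ n) (L x) = L ((L ^ n) x) := by
  have : L ^ n * L = L * L ^ n := (pow_mul_comm' L n)
  exact congrArg (fun M : X ≃L[ℂ] X => M x) this

theorem aux_comm' (L : X ≃L[ℂ] X) (n : ℕ) (x : X) :
    (L.symm ^ n) (L x) = L ((L.symm ^ n) x) := by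
  have h : Commute (L⁻¹ ^ n) L := (Commute.inv_left (Commute.refl L)).pow_left n
  exact congrArg (fun M : X ≃L[ℂ] X => M x) h.eq

theorem aux_eigen (L : X ≃L[ℂ] X) (z : ℂ) (hz : ‖z‖ = 1) (x : X) (h : L x = z • x)
    (ht : Tendsto (fun n : ℕ => (L ^ n) x) atTop (𝓝 0)) : x = 0 := by
  have h1 : ∀ n : ℕ, (L ^ n) x = z ^ n • x := by
    intro n
    induction n with
    | zero => simp; rfl
    | succ n ih =>
      rw [pow_succ]
      change (L ^ n) (L x) = _
      rw [aux_comm, ih, map_smul, h, smul_smul, pow_succ]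
  have h2 : Tendsto (fun n : ℕ => ‖(L ^ n) x‖) atTop (𝓝 0) := by simpa using ht.norm
  simp only [h1, norm_smul, norm_pow, hz, one_pow, one_mul] at h2
  exact norm_eq_zero.1 (tendsto_nhds_unique tendsto_const_nhds h2)

theorem hyperbolic_iff_homoclinic_trivial (L : X ≃L[ℂ] X)
    (hL : GeneralizedHyperbolic L) :
    Hyperbolic L ↔ Homoclinic L = {0} := by
  obtain ⟨S, U, -, -, hSU, hLS, hLU, c, hc, t, ht0, ht1, hS, hU⟩ := hL
  have hdec : ∀ x : X, ∃ s ∈ S, ∃ u ∈ U, s + u = x := fun x =>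
    Submodule.mem_sup.1 (hSU.sup_eq_top ▸ Submodule.mem_top)
  have hSd : ∀ s ∈ S, Tendsto (fun n : ℕ => (L ^ n) s) atTop (𝓝 0) := fun s hs =>
    aux_decay (C := c * ‖s‖) ht0 ht1 fun n => (hS s hs n).trans_eq (by ring)
  have hUd : ∀ u ∈ U, Tendsto (fun n : ℕ => (L.symm ^ n) u) atTop (𝓝 0) := fun s hs =>
    aux_decay (C := c * ‖s‖) ht0 ht1 fun n => (hU s hs n).trans_eq (by ring)
  constructor
  · intro hyp
    refine Set.eq_singleton_iff_unique_mem.2 ⟨(aux_hom_iff L 0).2 (by simp), ?_⟩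
    intro x hx
    obtain ⟨hx1, hx2⟩ := (aux_hom_iff L x).1 hx
    obtain ⟨s, hs, u, hu, rfl⟩ := hdec x
    have hs2 : Tendsto (fun n : ℕ => (L.symm ^ n) s) atTop (𝓝 0) := by
      simpa using hx2.sub (hUd u hu)
    have hu1 : Tendsto (fun n : ℕ => (L ^ n) u) atTop (𝓝 0) := by
      simpa using hx1.sub (hSd s hs)
    have hK : IsClosed ((fun z : ℂ => ‖z‖) '' spectrum ℂ (L : X →L[ℂ] X)) :=
      ((spectrum.isCompact (𝕜 := ℂ) (L : X →L[ℂ] X)).image continuous_norm).isClosed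
    have hev : ∀ᶠ r : ℝ in 𝓝 1, ∀ z ∈ spectrum ℂ (L : X →L[ℂ] X), ‖z‖ ≠ r := by
      have : (1:ℝ) ∈ ((fun z : ℂ => ‖z‖) '' spectrum ℂ (L : X →L[ℂ] X))ᶜ := by
        rintro ⟨z, hz, h⟩
        exact hyp z hz h
      filter_upwards [hK.isOpen_compl.mem_nhds this] with r hr z hz h
      exact hr ⟨z, hz, h⟩
    have hs0 : s = 0 := by
      obtain ⟨C, hC, hCb⟩ := aux_bdd hs2
      have hlt : ∀ᶠ r : ℝ in 𝓝[<] 1, r < 1 := eventually_mem_nhdsWithin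
      obtain ⟨ρ, hsp, hρt, hρ1⟩ := ((hev.filter_mono nhdsWithin_le_nhds).and
        (((eventually_gt_nhds ht1).filter_mono nhdsWithin_le_nhds).and hlt)).exists
      have hρ : 0 < ρ := ht0.trans hρt
      refine aux_core_nat L s ρ (max C (c * ‖s‖)) (max (t / ρ) ρ) hρ (lt_max_of_lt_right hρ)
        (max_lt ((div_lt_one hρ).2 hρt) hρ1) (le_max_of_le_left hC) hsp t 1 ht0.le zero_le_one
        ?_ ?_ ?_ ?_
      · exact (div_le_iff₀ hρ).1 (le_max_left _ _)
      · rw [one_mul]; exact le_max_right _ _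
      · intro n
        calc _ ≤ _ := hS s hs n
          _ = (c * ‖s‖) * t ^ n := by ring
          _ ≤ _ := by gcongr; exact le_max_right _ _
      · intro n
        rw [one_pow, mul_one]
        exact (hCb n).trans (le_max_left _ _)
    have hu0 : u = 0 := by
      obtain ⟨C, hC, hCb⟩ := aux_bdd hu1
      have hlt : ∀ᶠ r : ℝ in 𝓝[>] 1, 1 < r := eventually_mem_nhdsWithin
      obtain ⟨ρ, hsp, hρt, hρ1⟩ := ((hev.filter_mono nhdsWithin_le_nhds).and
        (((eventually_lt_nhds ((one_lt_inv₀ ht0).2 ht1)).filter_mono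
          nhdsWithin_le_nhds).and hlt)).exists
      have hρ : 0 < ρ := zero_lt_one.trans hρ1
      refine aux_core_nat L u ρ (max C (c * ‖u‖)) (max ρ⁻¹ (t * ρ)) hρ
        (lt_max_of_lt_left (inv_pos.2 hρ))
        (max_lt (inv_lt_one_of_one_lt₀ hρ1) ?_) (le_max_of_le_left hC) hsp 1 t zero_le_one ht0.le
        ?_ ?_ ?_ ?_
      · calc t * ρ < t * t⁻¹ := by gcongr
          _ = 1 := mul_inv_cancel₀ ht0.ne'
      · calc (1:ℝ) = ρ⁻¹ * ρ := (inv_mul_cancel₀ hρ.ne').symm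
          _ ≤ _ := by gcongr; exact le_max_left _ _
      · exact le_max_right _ _
      · intro n
        rw [one_pow, mul_one]
        exact (hCb n).trans (le_max_left _ _)
      · intro n
        calc _ ≤ _ := hU u hu n
          _ = (c * ‖u‖) * t ^ n := by ring
          _ ≤ _ := by gcongr; exact le_max_right _ _
    rw [hs0, hu0, add_zero]
  · intro hH z hz hz1
    have hz0 : z ≠ 0 := by rintro rfl; simp at hz1
    rw [spectrum.mem_iff] at hz
    apply hz
    rw [ContinuousLinearMap.isUnit_iff_bijective]
    have happ : ∀ x, (algebraMap ℂ (X →L[ℂ] X) z - (L : X →L[ℂ] X)) x = z • x - L x := by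
      intro x
      simp [Algebra.algebraMap_eq_smul_one]
    constructor
    · rw [injective_iff_map_eq_zero]
      intro x hx
      rw [happ, sub_eq_zero] at hx
      obtain ⟨s, hs, u, hu, rfl⟩ := hdec x
      have hw : L s - z • s = z • u - L u := by
        rw [map_add, smul_add] at hx
        rw [sub_eq_sub_iff_add_eq_add, ← hx]; abel
      have hwH : L s - z • s ∈ Homoclinic L := by
        rw [aux_hom_iff]
        constructor
        · have h1 := hSd s hs
          have h2 := ((L.continuous.tendsto 0).comp (h1)).sub (h1.const_smul z)
          simpa [Function.comp_def, aux_comm] using h2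
        · rw [hw]
          have h1 := hUd u hu
          have h2 := (h1.const_smul z).sub ((L.continuous.tendsto 0).comp (h1))
          simpa [Function.comp_def, aux_comm'] using h2
      rw [hH, Set.mem_singleton_iff] at hwH
      have hs0 : s = 0 := aux_eigen L z hz1 s (sub_eq_zero.1 hwH) (hSd s hs)
      have hu0 : u = 0 := by
        rw [hw, sub_eq_zero] at hwH
        refine aux_eigen L.symm z⁻¹ (by simp [hz1]) u ?_ (hUd u hu)
        rw [ContinuousLinearEquiv.symm_apply_eq, map_smul, ← hwH, smul_smul, inv_mul_cancel₀ hz0,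
          one_smul]
      rw [hs0, hu0, add_zero]
    · intro y
      obtain ⟨s, hs, u, hu, rfl⟩ := hdec y
      obtain ⟨a, ha⟩ := aux_neumann (z⁻¹ • (L : X →L[ℂ] X)) (z⁻¹ • s) (c * ‖s‖) t ht0 ht1 (by
        intro n
        have := hS s hs n
        rw [smul_pow, map_smul, norm_smul, ContinuousLinearMap.smul_apply, norm_smul, norm_pow,
          norm_inv, hz1, aux_coe_pow]
        simp only [inv_one, one_pow, one_mul]
        linarith)
      obtain ⟨b, hb⟩ := aux_neumann (z • (L.symm : X →L[ℂ] X)) (L.symm u) (c * ‖L.symm u‖) t ht0 ht1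
        (by
        intro n
        have := hU _ (hLU u hu) n
        rw [smul_pow, ContinuousLinearMap.smul_apply, norm_smul, norm_pow,
          hz1, aux_coe_pow]
        simp only [one_pow, one_mul]
        linarith)
      refine ⟨a - b, ?_⟩
      rw [map_sub, happ, happ]
      have ha' : z • a - L a = s := by
        have := congrArg (fun v => z • v) ha
        simpa [smul_sub, smul_smul, hz0] using this
      have hb' : L b - z • b = u := by
        have := congrArg L hb
        simpa using this
      rw [ha', ← hb']; abel
end

section
/- Let X be a nonzero complex Banach space. The set of topologically transitive invertible bounded linear operators on X has empty interior in the operator-norm topology: for every invertible bounded linear operator L on X and every ε > 0 there is an invertible bounded linear operator T on X with ‖T − L‖ < ε such that T is not topologically transitive. -/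
open Filter Topology

variable {X : Type*} [NormedAddCommGroup X] [NormedSpace ℂ X] [CompleteSpace X]

/-- `T` is topologically transitive (hypercyclic): some orbit is dense. -/
def TopologicallyTransitive (T : X ≃L[ℂ] X) : Prop :=
  ∃ x : X, DenseRange (fun n : ℕ => (T ^ n) x)

lemma aux_not_dense (μ c : ℂ) : ¬ DenseRange (fun n : ℕ => μ ^ n * c) := by
  intro h
  have key : ∀ s : Set ℂ, IsClosed s → (∀ n : ℕ, μ ^ n * c ∈ s) → ∀ z, z ∈ s := by
    intro s hs hn z
    exact hs.closure_subset_iff.2 (Set.range_subset_iff.2 hn) (h z)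
  have hb : ¬ ∀ n : ℕ, ‖μ ^ n * c‖ ≤ ‖c‖ := by
    intro hn
    have := key {z | ‖z‖ ≤ ‖c‖} (isClosed_le continuous_norm continuous_const) hn
      ((‖c‖ + 1 : ℝ) : ℂ)
    simp only [Set.mem_ofPred_eq, Complex.norm_real, Real.norm_eq_abs] at this
    have h2 := le_abs_self (‖c‖ + 1)
    linarith
  rcases le_or_gt ‖μ‖ 1 with hμ | hμ
  · apply hb
    intro n
    rw [norm_mul, norm_pow]
    exact mul_le_of_le_one_left (norm_nonneg _) (pow_le_one₀ (norm_nonneg _) hμ)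
  · have := key {z | ‖c‖ ≤ ‖z‖} (isClosed_le continuous_const continuous_norm) (by
      intro n
      simp only [Set.mem_ofPred_eq]
      rw [norm_mul, norm_pow]
      exact le_mul_of_one_le_left (norm_nonneg _) (one_le_pow₀ hμ.le)) 0
    have hc : c = 0 := by simpa using this
    apply hb
    intro n
    simp [hc]

lemma aux_not_transitive (T : X ≃L[ℂ] X) (ψ : X →L[ℂ] ℂ) (x : X) (hx : ψ x = 1) (μ : ℂ)
    (h : ∀ y, ψ (T y) = μ * ψ y) : ¬ TopologicallyTransitive T := by
  rintro ⟨v, hv⟩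
  have hs : Function.Surjective ψ := fun z => ⟨z • x, by simp [hx]⟩
  have hd := hs.denseRange.comp hv ψ.continuous
  have he : ∀ n : ℕ, ψ ((T ^ n) v) = μ ^ n * ψ v := by
    intro n
    induction n with
    | zero => simp; rfl
    | succ n ih =>
      have : (T ^ (n + 1)) v = T ((T ^ n) v) := by rw [pow_succ']; rfl
      rw [this, h, ih]; ring
  apply aux_not_dense μ (ψ v)
  convert hd using 1
  funext n
  exact (he n).symm

lemma aux_resolvent [Nontrivial X] (A : X →L[ℂ] X) (δ : ℝ) (hδ : 0 < δ) :
    ∃ μ : ℂ, ∃ u : (X →L[ℂ] X)ˣ, (u : X →L[ℂ] X) = algebraMap ℂ (X →L[ℂ] X) μ - A ∧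
      δ⁻¹ < ‖((u⁻¹ : (X →L[ℂ] X)ˣ) : X →L[ℂ] X)‖ := by
  have hne : (frontier (spectrum ℂ A)).Nonempty := by
    rw [nonempty_frontier_iff]
    refine ⟨spectrum.nonempty A, fun h => ?_⟩
    have := spectrum.isCompact (𝕜 := ℂ) A
    rw [h] at this
    exact noncompact_univ ℂ this
  obtain ⟨l, hl⟩ := hne
  have hl1 : l ∈ spectrum ℂ A := (spectrum.isClosed A).frontier_subset hl
  have hl2 : l ∈ closure (spectrum ℂ A)ᶜ := by
    rw [frontier_eq_closure_inter_closure] at hl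
    exact hl.2
  obtain ⟨μ, hμ, hd⟩ := Metric.mem_closure_iff.1 hl2 δ hδ
  rw [Set.mem_compl_iff, spectrum.mem_iff, not_not] at hμ
  obtain ⟨u, hu⟩ := hμ
  refine ⟨μ, u, hu, ?_⟩
  have hpos : 0 < ‖((u⁻¹ : (X →L[ℂ] X)ˣ) : X →L[ℂ] X)‖ := Units.norm_pos _
  rw [inv_lt_comm₀ hδ hpos]
  refine lt_of_le_of_lt ?_ hd
  by_contra! hcon
  apply (spectrum.mem_iff.1 hl1)
  refine ⟨Units.ofNearby u (algebraMap ℂ (X →L[ℂ] X) l - A) ?_, rfl⟩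
  rw [hu, sub_sub_sub_cancel_right, ← map_sub, norm_algebraMap', ← dist_eq_norm]
  exact hcon

/-- The set of transitive operators has empty interior in the operator norm
topology. -/
theorem transitive_empty_interior [Nontrivial X] (L : X ≃L[ℂ] X)
    (ε : ℝ) (hε : 0 < ε) :
    ∃ T : X ≃L[ℂ] X, ‖(T : X →L[ℂ] X) - (L : X →L[ℂ] X)‖ < ε ∧
      ¬ TopologicallyTransitive T := by
  let U : (X →L[ℂ] X)ˣ := (ContinuousLinearEquiv.unitsEquiv ℂ X).symm L
  have hU : (U : X →L[ℂ] X) = L := rfl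
  have hpos : 0 < ‖((U⁻¹ : (X →L[ℂ] X)ˣ) : X →L[ℂ] X)‖ := Units.norm_pos _
  set δ := min ε ‖((U⁻¹ : (X →L[ℂ] X)ˣ) : X →L[ℂ] X)‖⁻¹ with hδd
  have hδ : 0 < δ := lt_min hε (inv_pos.2 hpos)
  obtain ⟨μ, u, hu, hR⟩ := aux_resolvent (L : X →L[ℂ] X) δ hδ
  set R : X →L[ℂ] X := ((u⁻¹ : (X →L[ℂ] X)ˣ) : X →L[ℂ] X) with hRd
  have hRu : ∀ y, R (μ • y - L y) = y := by
    intro y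
    have h1 : R * (u : X →L[ℂ] X) = 1 := u.inv_mul
    have h2 := congrArg (fun S : X →L[ℂ] X => S y) h1
    rw [hu] at h2
    simpa [Algebra.algebraMap_eq_smul_one] using h2
  obtain ⟨y, hy⟩ : ∃ y, δ⁻¹ * ‖y‖ < ‖R y‖ := by
    by_contra! hcon
    exact absurd (R.opNorm_le_bound (inv_pos.2 hδ).le hcon) (not_le.2 hR)
  have hRy : 0 < ‖R y‖ := lt_of_le_of_lt (by positivity) hy
  obtain ⟨φ, hφ1, hφ⟩ := exists_dual_vector ℂ (R y) hRy.ne'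
  have hcoe : φ (R y) = ((‖R y‖ : ℝ) : ℂ) := hφ
  let x : X := ((‖R y‖ : ℝ) : ℂ)⁻¹ • y
  have hne : ((‖R y‖ : ℝ) : ℂ) ≠ 0 := by exact_mod_cast hRy.ne'
  have hx : φ (R x) = 1 := by
    simp only [x, map_smul, hcoe, smul_eq_mul]
    exact inv_mul_cancel₀ hne
  have hxn : ‖x‖ < δ := by
    simp only [x, norm_smul, norm_inv, Complex.norm_real, norm_norm]
    rw [inv_mul_lt_iff₀ hRy]
    rw [inv_mul_lt_iff₀ hδ] at hy
    linarith
  let P : X →L[ℂ] X := φ.smulRight x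
  have hP : ‖P‖ < δ := by
    simp only [P, ContinuousLinearMap.norm_smulRight_apply, hφ1, one_mul]
    exact hxn
  let V : (X →L[ℂ] X)ˣ := Units.ofNearby U ((L : X →L[ℂ] X) + P) (by
    rw [hU, add_sub_cancel_left]
    exact lt_of_lt_of_le hP (min_le_right _ _))
  let T : X ≃L[ℂ] X := ContinuousLinearEquiv.unitsEquiv ℂ X V
  have hT : (T : X →L[ℂ] X) = (L : X →L[ℂ] X) + P := rfl
  refine ⟨T, ?_, ?_⟩
  · rw [hT, add_sub_cancel_left]
    exact lt_of_lt_of_le hP (min_le_left _ _)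
  · apply aux_not_transitive T (φ.comp R) x hx μ
    intro z
    have hTz : T z = L z + φ z • x := congrArg (fun S : X →L[ℂ] X => S z) hT
    have h3 := congrArg φ (hRu z)
    simp only [map_sub, map_smul, smul_eq_mul] at h3
    simp only [ContinuousLinearMap.comp_apply, hTz, map_add, map_smul, smul_eq_mul, hx]
    rw [← h3]; ring
end

section
/- Let X be a complex Banach space and L an invertible bounded linear operator on X. The set H = {x ∈ X : Lⁿ(x) → 0 as n → ±∞} of homoclinic points of L is a subspace of X with L(H) = H, and H is closed if and only if H = {0}. -/
open Filter Topology

variable {X : Type*} [NormedAddCommGroup X] [NormedSpace ℂ X] [CompleteSpace X]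

theorem zpow_apply_add (L : X ≃L[ℂ] X) (n m : ℤ) (x : X) :
    (L ^ n) ((L ^ m) x) = (L ^ (n + m)) x := by
  rw [zpow_add]; rfl

theorem zpow_mem_homoclinic (L : X ≃L[ℂ] X) (m : ℤ) (x : X) (hx : x ∈ Homoclinic L) :
    (L ^ m) x ∈ Homoclinic L := by
  refine ⟨?_, ?_⟩
  · simp only [zpow_apply_add]
    exact hx.1.comp (tendsto_atTop_add_const_right _ m tendsto_id)
  · simp only [zpow_apply_add]
    exact hx.2.comp (tendsto_atBot_add_const_right _ m tendsto_id)

theorem homoclinic_subspace_closed_iff (L : X ≃L[ℂ] X) :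
    (0 : X) ∈ Homoclinic L ∧
    (∀ x ∈ Homoclinic L, ∀ y ∈ Homoclinic L, x + y ∈ Homoclinic L) ∧
    (∀ (c : ℂ), ∀ x ∈ Homoclinic L, c • x ∈ Homoclinic L) ∧
    ⇑L '' Homoclinic L = Homoclinic L ∧
    (IsClosed (Homoclinic L) ↔ Homoclinic L = {0}) := by
  have h0 : (0 : X) ∈ Homoclinic L := by
    constructor <;> simp
  have hadd : ∀ x ∈ Homoclinic L, ∀ y ∈ Homoclinic L, x + y ∈ Homoclinic L := by
    intro x hx y hy
    constructor
    · simpa using hx.1.add hy.1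
    · simpa using hx.2.add hy.2
  have hsmul : ∀ (c : ℂ), ∀ x ∈ Homoclinic L, c • x ∈ Homoclinic L := by
    intro c x hx
    constructor
    · simpa using hx.1.const_smul c
    · simpa using hx.2.const_smul c
  refine ⟨h0, hadd, hsmul, ?_, ?_, ?_⟩
  · ext y
    constructor
    · rintro ⟨x, hx, rfl⟩
      simpa using zpow_mem_homoclinic L 1 x hx
    · intro hy
      refine ⟨(L ^ (-1 : ℤ)) y, zpow_mem_homoclinic L (-1) y hy, ?_⟩
      have := zpow_apply_add L 1 (-1) y
      rw [add_neg_cancel, zpow_zero, zpow_one] at this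
      exact this
  · intro hc
    let S : Submodule ℂ X :=
      { carrier := Homoclinic L
        add_mem' := fun {a b} ha hb => hadd a ha b hb
        zero_mem' := h0
        smul_mem' := fun c x hx => hsmul c x hx }
    have : CompleteSpace S := IsClosed.completeSpace_coe (s := Homoclinic L) (hs := hc)
    obtain ⟨C, hC⟩ := banach_steinhaus
      (g := fun n : ℤ => ((L ^ n : X ≃L[ℂ] X) : X →L[ℂ] X).comp S.subtypeL) (by
        intro x
        have hx : (x : X) ∈ Homoclinic L := x.2
        have ht : Tendsto (fun n : ℤ => ‖(L ^ n) (x : X)‖) cofinite (𝓝 0) := by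
          rw [Int.cofinite_eq]
          simpa using (hx.2.sup hx.1).norm
        obtain ⟨C, hC⟩ := ht.bddAbove_range_of_cofinite
        exact ⟨C, fun n => hC ⟨n, rfl⟩⟩)
    refine Set.eq_singleton_iff_unique_mem.2 ⟨h0, fun x hx => ?_⟩
    have hb : ∀ n : ℤ, ‖x‖ ≤ C * ‖(L ^ n) x‖ := by
      intro n
      have h1 := ContinuousLinearMap.le_of_opNorm_le _ (hC (-n))
        (⟨(L ^ n) x, zpow_mem_homoclinic L n x hx⟩ : S)
      have h2 : (L ^ (-n)) ((L ^ n) x) = x := by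
        rw [zpow_apply_add, neg_add_cancel, zpow_zero]; rfl
      change ‖(L ^ (-n)) ((L ^ n) x)‖ ≤ C * ‖(L ^ n) x‖ at h1
      rwa [h2] at h1
    have hl : Tendsto (fun n : ℤ => C * ‖(L ^ n) x‖) atTop (𝓝 0) := by
      simpa using hx.1.norm.const_mul C
    exact norm_le_zero_iff.1 (ge_of_tendsto' hl hb)
  · intro h
    rw [h]
    exact isClosed_singleton
end

section
/- Let X be a complex Banach space and L an invertible bounded linear operator on X. Then L has the shadowing property if and only if Shad(L) < ∞, i.e. if and only if L admits a shadowableness constant. -/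
open Filter Topology

variable {X : Type*} [NormedAddCommGroup X] [NormedSpace ℂ X] [CompleteSpace X]

theorem aux_primitive {A : Type*} [AddCommGroup A] (f : ℤ → A) :
    ∃ w : ℤ → A, ∀ n, w (n + 1) = w n + f n := by
  refine ⟨fun n => ∑ i ∈ Finset.range n.toNat, f i
    - ∑ i ∈ Finset.range (-n).toNat, f (-(i + 1 : ℤ)), fun n => ?_⟩
  rcases le_or_gt 0 n with h | h
  · obtain ⟨k, rfl⟩ := Int.eq_ofNat_of_zero_le h
    have h1 : ((k : ℤ) + 1).toNat = k + 1 := by omega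
    have h2 : (-((k : ℤ) + 1)).toNat = 0 := by omega
    have h3 : (-(k : ℤ)).toNat = 0 := by omega
    simp only [h1, h2, h3, Int.toNat_natCast, Finset.sum_range_succ]
    simp
  · obtain ⟨k, hk⟩ := Int.eq_ofNat_of_zero_le (show 0 ≤ -n - 1 by omega)
    obtain rfl : n = -(k + 1 : ℤ) := by omega
    have h1 : (-((k : ℤ) + 1) + 1).toNat = 0 := by omega
    have h2 : (-(-((k : ℤ) + 1) + 1)).toNat = k := by omega
    have h3 : (-(-((k : ℤ) + 1))).toNat = k + 1 := by omega
    have h4 : (-((k : ℤ) + 1)).toNat = 0 := by omega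
    simp only [h1, h2, h3, h4, Finset.sum_range_succ]
    simp

theorem aux_zpow_succ (L : X ≃L[ℂ] X) (n : ℤ) (v : X) :
    (L ^ (n + 1)) v = L ((L ^ n) v) := by
  rw [add_comm, zpow_one_add]; rfl

theorem aux_solve (L : X ≃L[ℂ] X) (z : ℤ → X) :
    ∃ x : ℤ → X, ∀ n, x (n + 1) = L (x n) + z n := by
  obtain ⟨w, hw⟩ := aux_primitive (fun n => (L ^ (n + 1)).symm (z n))
  refine ⟨fun n => (L ^ n) (w n), fun n => ?_⟩
  simp only [hw, map_add, ContinuousLinearEquiv.apply_symm_apply]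
  rw [aux_zpow_succ]

theorem aux_orbit (L : X ≃L[ℂ] X) (u : ℤ → X) (hu : ∀ n, u (n + 1) = L (u n)) (n : ℤ) :
    (L ^ n) (u 0) = u n := by
  induction n using Int.induction_on with
  | zero => rfl
  | succ k ih => rw [aux_zpow_succ, ih, hu]
  | pred k ih =>
    apply L.injective
    rw [← aux_zpow_succ, ← hu]
    simpa using ih

/-- `L` has the shadowing property iff it admits a shadowableness constant. -/
theorem shadowing_iff_shadowablenessConstant (L : X ≃L[ℂ] X) :
    ShadowingProperty L ↔ ∃ K : ℝ, ShadowablenessConstant L K := by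
  constructor
  · intro h
    obtain ⟨δ, hδ, H⟩ := h 1 one_pos
    refine ⟨1 / δ, by positivity, ?_⟩
    rintro z ⟨M, hM⟩
    have hb : BddAbove (Set.range fun n => ‖z n‖) := ⟨M, by rintro _ ⟨n, rfl⟩; exact hM n⟩
    set S := ⨆ n : ℤ, ‖z n‖ with hS
    have hzS : ∀ n, ‖z n‖ ≤ S := fun n => le_ciSup hb n
    have hS0 : 0 ≤ S := (norm_nonneg _).trans (hzS 0)
    rcases hS0.eq_or_lt with h0 | hpos
    · refine ⟨fun _ => 0, fun n => by simp [← h0], fun n => ?_⟩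
      have : z n = 0 := norm_le_zero_iff.1 (h0 ▸ hzS n)
      simp [this]
    · obtain ⟨x, hx⟩ := aux_solve L (fun n => ((δ / S : ℝ) : ℂ) • z n)
      obtain ⟨p, hp⟩ := H x (fun n => by
        rw [hx, sub_add_cancel_left, norm_neg, norm_smul, Complex.norm_real,
          Real.norm_of_nonneg (by positivity)]
        calc δ / S * ‖z n‖ ≤ δ / S * S := by gcongr; exact hzS n
          _ = δ := by field_simp)
      refine ⟨fun n => ((S / δ : ℝ) : ℂ) • (x n - (L ^ n) p), fun n => ?_, fun n => ?_⟩
      · rw [norm_smul, Complex.norm_real, Real.norm_of_nonneg (by positivity), norm_sub_rev]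
        calc S / δ * ‖(L ^ n) p - x n‖ ≤ S / δ * 1 := by gcongr; exact hp n
          _ = 1 / δ * S := by ring
      · have hc : ((S / δ : ℝ) : ℂ) * ((δ / S : ℝ) : ℂ) = 1 := by
          rw [← Complex.ofReal_mul, div_mul_div_cancel₀ hδ.ne', div_self hpos.ne',
            Complex.ofReal_one]
        simp only [hx, aux_zpow_succ, map_smul, map_sub]
        rw [add_sub_right_comm, smul_add, smul_smul, hc, one_smul]
  · rintro ⟨K, hK, H⟩ ε hε
    refine ⟨ε / K, by positivity, fun x hx => ?_⟩
    obtain ⟨y, hy, hyr⟩ := H (fun n => L (x n) - x (n + 1)) ⟨_, hx⟩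
    refine ⟨x 0 + y 0, fun n => ?_⟩
    have := aux_orbit L (fun n => x n + y n) (fun n => by simp only [hyr, map_add]; abel) n
    rw [this, add_sub_cancel_left]
    calc _ ≤ _ := hy n
      _ ≤ K * (ε / K) := by gcongr; exact ciSup_le hx
      _ = ε := by field_simp
end

section
/- Let X be a complex Banach space and L an invertible bounded linear operator on X. If L has the shadowing property, then X = E^cs + E^cu, where E^cs = {x ∈ X : sup_{n≥0}‖Lⁿ(x)‖ < ∞} and E^cu = {x ∈ X : sup_{n≥0}‖L⁻ⁿ(x)‖ < ∞}. -/
open Filter Topology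

variable {X : Type*} [NormedAddCommGroup X] [NormedSpace ℂ X] [CompleteSpace X]

/-- If `L` has the shadowing property then `X = E^cs + E^cu`. -/
theorem eq_add_of_shadowing (L : X ≃L[ℂ] X) (hL : ShadowingProperty L) :
    ∀ x : X, ∃ y ∈ {v : X | ∃ M : ℝ, ∀ n : ℕ, ‖(L ^ n) v‖ ≤ M},
      ∃ z ∈ {v : X | ∃ M : ℝ, ∀ n : ℕ, ‖(L.symm ^ n) v‖ ≤ M}, x = y + z := by
  intro x
  obtain ⟨δ, hδ, h⟩ := hL 1 one_pos
  have hpos : 0 < ‖x‖ + 1 := by positivity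
  set c : ℝ := δ / (‖x‖ + 1) with hc
  have hcpos : 0 < c := by positivity
  have hcne : (c : ℂ) ≠ 0 := by exact_mod_cast hcpos.ne'
  set w : X := (c : ℂ) • x with hw
  have hwδ : ‖w‖ ≤ δ := by
    rw [hw, norm_smul, Complex.norm_real, Real.norm_of_nonneg hcpos.le, hc, div_mul_eq_mul_div,
      div_le_iff₀ hpos]
    nlinarith
  obtain ⟨p, hp⟩ := h (fun n => if 0 ≤ n then (L ^ n) w else 0) (by
    intro n
    rcases lt_trichotomy n (-1) with hn | hn | hn
    · have h1 : ¬ (0 ≤ n) := by omega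
      have h2 : ¬ (0 ≤ n + 1) := by omega
      simp only [h1, h2, if_false, map_zero, sub_zero, norm_zero]
      exact hδ.le
    · subst hn
      have h1 : (1 : X ≃L[ℂ] X) w = w := rfl
      simpa [h1] using hwδ
    · have h1 : 0 ≤ n := by omega
      have h2 : 0 ≤ n + 1 := by omega
      simp only [h1, h2, if_true]
      have : (L ^ (n + 1)) w = L ((L ^ n) w) := by
        rw [add_comm, zpow_one_add]; rfl
      rw [this, sub_self, norm_zero]
      exact hδ.le)
  refine ⟨(c : ℂ)⁻¹ • (w - p), ⟨‖(c : ℂ)⁻¹‖ * 1, fun n => ?_⟩,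
    (c : ℂ)⁻¹ • p, ⟨‖(c : ℂ)⁻¹‖ * (1 + ‖p‖), fun n => ?_⟩, ?_⟩
  · rw [map_smul, norm_smul]
    gcongr
    have := hp n
    simp only [Int.natCast_nonneg, if_true, zpow_natCast] at this
    rw [map_sub, norm_sub_rev]
    exact this
  · rw [map_smul, norm_smul]
    gcongr
    rcases Nat.eq_zero_or_pos n with rfl | hn
    · have h1 : (1 : X ≃L[ℂ] X) p = p := rfl
      simp [h1]
    · have h3 := hp (-(n : ℤ))
      have h1 : ¬ (0 ≤ -(n : ℤ)) := by omega
      have h2 : L ^ (-(n : ℤ)) = L.symm ^ n := by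
        rw [zpow_neg, zpow_natCast, ← inv_pow]; rfl
      simp only [h1, if_false, sub_zero, h2] at h3
      linarith [norm_nonneg p]
  · rw [← smul_add, sub_add_cancel, hw, smul_smul, inv_mul_cancel₀ hcne, one_smul]
end

section
/- Let X be a complex Banach space and L an invertible bounded linear operator on X. If L is uniformly expansive, then there are constants c > 0 and 0 < β < 1 such that E^cs = {x ∈ X : ‖Lⁿ(x)‖ ≤ c βⁿ ‖x‖ for all n ≥ 0}, where E^cs = {x ∈ X : sup_{n≥0}‖Lⁿ(x)‖ < ∞}. -/
open Filter Topology

variable {X : Type*} [NormedAddCommGroup X] [NormedSpace ℂ X] [CompleteSpace X]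

/-- `L` is uniformly expansive. -/
def UniformlyExpansive (L : X ≃L[ℂ] X) : Prop :=
  ∃ m : ℕ, 0 < m ∧ ∀ x : X, ‖x‖ = 1 →
    2 ≤ ‖(L ^ m) x‖ ∨ 2 ≤ ‖(L.symm ^ m) x‖

theorem cs_pow_add (L : X ≃L[ℂ] X) (a b : ℕ) (x : X) :
    (L ^ (a + b)) x = (L ^ a) ((L ^ b) x) := by
  rw [pow_add]; rfl

theorem cs_symm_pow (L : X ≃L[ℂ] X) (a : ℕ) (x : X) :
    (L.symm ^ a) ((L ^ a) x) = x := by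
  have h : L.symm ^ a * L ^ a = 1 := by
    have : L.symm = L⁻¹ := rfl
    rw [this, inv_pow, inv_mul_cancel]
  exact congrArg (fun T : X ≃L[ℂ] X => T x) h

theorem cs_bound (L : X ≃L[ℂ] X) : ∃ K : ℝ, 1 ≤ K ∧ ∀ (n : ℕ) (x : X),
    ‖(L ^ n) x‖ ≤ K ^ n * ‖x‖ := by
  refine ⟨‖(L : X →L[ℂ] X)‖ + 1, by linarith [norm_nonneg (L : X →L[ℂ] X)], ?_⟩
  intro n x
  induction n with
  | zero =>
    have h1 : (L ^ 0) x = x := by rw [pow_zero]; rfl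
    rw [h1]; simp
  | succ n ih =>
    have h1 : (L ^ (n + 1)) x = L ((L ^ n) x) := by
      rw [add_comm, cs_pow_add, pow_one]
    have h2 : ‖L ((L ^ n) x)‖ ≤ ‖(L : X →L[ℂ] X)‖ * ‖(L ^ n) x‖ :=
      (L : X →L[ℂ] X).le_opNorm _
    have h0 := norm_nonneg (L : X →L[ℂ] X)
    rw [h1, pow_succ]
    nlinarith [norm_nonneg ((L ^ n) x)]

theorem cs_seq (a : ℕ → ℝ) (h0 : ∀ k, 0 ≤ a k) (M : ℝ) (hM : ∀ k, a k ≤ M)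
    (h : ∀ k, 2 * a (k + 1) ≤ a (k + 2) ∨ 2 * a (k + 1) ≤ a k) :
    ∀ k, a k ≤ (1 / 2) ^ k * a 0 := by
  have key : ∀ k, 2 * a (k + 1) ≤ a k := by
    intro k
    by_contra hk
    have h1 : 2 * a (k + 1) ≤ a (k + 2) := (h k).resolve_right hk
    have hpos : 0 < a (k + 1) := by linarith [h0 k]
    have grow : ∀ j, 2 ^ j * a (k + 1) ≤ a (k + 1 + j) ∧
        2 * a (k + 1 + j) ≤ a (k + 1 + j + 1) := by
      intro j
      induction j with
      | zero => exact ⟨by simp, h1⟩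
      | succ j ih =>
        obtain ⟨i1, i2⟩ := ih
        have hp : 0 < 2 ^ j * a (k + 1) := by positivity
        refine ⟨?_, ?_⟩
        · rw [pow_succ, ← add_assoc]; linarith
        · rcases h (k + 1 + j) with h3 | h3
          · exact h3
          · linarith
    obtain ⟨j, hj⟩ := pow_unbounded_of_one_lt (M / a (k + 1)) (one_lt_two)
    rw [div_lt_iff₀ hpos] at hj
    linarith [(grow j).1, hM (k + 1 + j)]
  intro k
  induction k with
  | zero => simp
  | succ k ih => rw [pow_succ]; linarith [key k]

theorem centerStable_of_uniformlyExpansive (L : X ≃L[ℂ] X)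
    (hL : UniformlyExpansive L) :
    ∃ c > (0 : ℝ), ∃ β : ℝ, 0 < β ∧ β < 1 ∧
      {x : X | ∃ M : ℝ, ∀ n : ℕ, ‖(L ^ n) x‖ ≤ M} =
        {x : X | ∀ n : ℕ, ‖(L ^ n) x‖ ≤ c * β ^ n * ‖x‖} := by
  obtain ⟨m, hm, hexp⟩ := hL
  obtain ⟨K, hK1, hK⟩ := cs_bound L
  have hexp' : ∀ x : X, 2 * ‖x‖ ≤ ‖(L ^ m) x‖ ∨ 2 * ‖x‖ ≤ ‖(L.symm ^ m) x‖ := by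
    intro x
    by_cases hx : x = 0
    · left; simp [hx]
    have hn : 0 < ‖x‖ := norm_pos_iff.mpr hx
    have hs : ∀ T : X ≃L[ℂ] X, ‖T (((‖x‖⁻¹ : ℝ) : ℂ) • x)‖ = ‖x‖⁻¹ * ‖T x‖ := by
      intro T
      rw [map_smul, norm_smul]; simp
    have := hexp (((‖x‖⁻¹ : ℝ) : ℂ) • x) (by
      rw [norm_smul]; simp [hn.ne'])
    rw [hs, hs, inv_mul_eq_div, inv_mul_eq_div, le_div_iff₀ hn, le_div_iff₀ hn] at this
    exact this
  obtain ⟨β, hβ0, hβm⟩ : ∃ β : ℝ, 0 < β ∧ β ^ m = 1 / 2 :=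
    ⟨(1 / 2 : ℝ) ^ ((m : ℝ)⁻¹), by positivity,
      Real.rpow_inv_natCast_pow (by norm_num) hm.ne'⟩
  have hβ1 : β < 1 := by
    by_contra hc
    have := one_le_pow₀ (n := m) (not_lt.mp hc)
    rw [hβm] at this
    norm_num at this
  refine ⟨2 * K ^ m, by positivity, β, hβ0, hβ1, ?_⟩
  ext x
  simp only [Set.mem_ofPred_eq]
  constructor
  · rintro ⟨M, hM⟩ n
    have hs := cs_seq (fun k => ‖(L ^ (m * k)) x‖) (fun _ => norm_nonneg _) M
      (fun k => hM _) (by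
        intro k
        have e1 : (L ^ (m * (k + 2))) x = (L ^ m) ((L ^ (m * (k + 1))) x) := by
          rw [← cs_pow_add]; congr 2; ring
        have e2 : (L ^ (m * k)) x = (L.symm ^ m) ((L ^ (m * (k + 1))) x) := by
          rw [show m * (k + 1) = m + m * k by ring, cs_pow_add, cs_symm_pow]
        have := hexp' ((L ^ (m * (k + 1))) x)
        rwa [← e1, ← e2] at this) (n / m)
    simp only [mul_zero, pow_zero] at hs
    have hs' : ‖(L ^ (m * (n / m))) x‖ ≤ (1 / 2) ^ (n / m) * ‖x‖ := hs
    have hr : n % m < m := Nat.mod_lt _ hm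
    have hn : n % m + m * (n / m) = n := Nat.mod_add_div n m
    have hb : β ^ n = β ^ (n % m) * (1 / 2) ^ (n / m) := by
      rw [← hβm, ← pow_mul, ← pow_add, hn]
    have hb2 : 1 / 2 ≤ β ^ (n % m) := by
      rw [← hβm]; exact pow_le_pow_of_le_one hβ0.le hβ1.le hr.le
    have hKp : K ^ (n % m) ≤ K ^ m := pow_le_pow_right₀ hK1 hr.le
    have hp : 0 ≤ K ^ m * ((1 / 2) ^ (n / m) * ‖x‖) := by positivity
    calc ‖(L ^ n) x‖ = ‖(L ^ (n % m)) ((L ^ (m * (n / m))) x)‖ := by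
          rw [← cs_pow_add, hn]
      _ ≤ K ^ (n % m) * ‖(L ^ (m * (n / m))) x‖ := hK _ _
      _ ≤ K ^ m * ((1 / 2) ^ (n / m) * ‖x‖) := by gcongr
      _ ≤ 2 * β ^ (n % m) * (K ^ m * ((1 / 2) ^ (n / m) * ‖x‖)) :=
          le_mul_of_one_le_left hp (by linarith)
      _ = 2 * K ^ m * β ^ n * ‖x‖ := by rw [hb]; ring
  · intro h
    refine ⟨2 * K ^ m * ‖x‖, fun n => (h n).trans ?_⟩
    have : β ^ n ≤ 1 := pow_le_one₀ hβ0.le hβ1.le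
    exact mul_le_mul_of_nonneg_right (mul_le_of_le_one_right (by positivity) this) (norm_nonneg x)
end

section
/- Let X be a complex Banach space with X ≠ {0} and let L : X → X be a surjective linear isometry (an invertible bounded linear operator with ‖L(x)‖ = ‖x‖ for all x ∈ X). Then L does not have the shadowing property. -/
open Filter Topology

variable {X : Type*} [NormedAddCommGroup X] [NormedSpace ℂ X] [CompleteSpace X]

/-- A surjective linear isometry of a nonzero Banach space does not have the
shadowing property. -/
theorem isometry_not_shadowing [Nontrivial X] (L : X ≃L[ℂ] X)
    (hiso : ∀ x : X, ‖L x‖ = ‖x‖) : ¬ ShadowingProperty L := by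
  intro h
  obtain ⟨δ, hδ, h⟩ := h 1 one_pos
  obtain ⟨v, hv⟩ := exists_ne (0 : X)
  have hv' : 0 < ‖v‖ := norm_pos_iff.mpr hv
  have hstep : ∀ (n : ℤ) (x : X), L ((L ^ n) x) = (L ^ (n + 1)) x := by
    intro n x
    rw [add_comm, zpow_add, zpow_one]
    rfl
  have hpow : ∀ (n : ℕ) (x : X), ‖(L ^ (n : ℤ)) x‖ = ‖x‖ := by
    intro n x
    induction n with
    | zero => simp; rfl
    | succ k ih =>
      rw [Nat.cast_succ, ← hstep, hiso, ih]
  have hz : ∀ (n : ℤ) (x : X), ‖(L ^ n) x‖ = ‖x‖ := by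
    intro n x
    obtain ⟨m, rfl | rfl⟩ := n.eq_nat_or_neg
    · exact hpow m x
    · rw [← hpow m ((L ^ (-(m : ℤ))) x)]
      have : (L ^ (m : ℤ) * L ^ (-(m : ℤ))) x = x := by
        rw [← zpow_add]; simp; rfl
      exact congrArg norm this
  set w : X := ((δ / ‖v‖ : ℝ) : ℂ) • v with hw
  have hwn : ‖w‖ = δ := by
    rw [hw, norm_smul, Complex.norm_real, Real.norm_of_nonneg (by positivity)]
    field_simp
  obtain ⟨p, hp⟩ := h (fun n => (L ^ n) ((n : ℂ) • w)) (by
    intro n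
    rw [hstep, ← map_sub, hz, ← sub_smul, norm_smul, hwn]
    simp)
  have hp' : ∀ n : ℕ, ‖p - (n : ℂ) • w‖ ≤ 1 := by
    intro n
    have := hp n
    rw [← map_sub, hz] at this
    simpa using this
  obtain ⟨N, hN⟩ := exists_nat_gt (2 / δ)
  have h0 := hp' 0
  have h1 := hp' N
  have h2 : ‖(N : ℂ) • w‖ = N * δ := by rw [norm_smul, hwn]; simp
  have h3 : ‖(N : ℂ) • w‖ ≤ ‖p‖ + ‖p - (N : ℂ) • w‖ := by
    have := norm_sub_le p (p - (N : ℂ) • w)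
    simpa using this
  simp at h0
  rw [div_lt_iff₀ hδ] at hN
  linarith
end
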